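/- arXiv:1704.07650 — 3 statements merged into one kernel-verified Lean document; each statement's English description precedes it below -/
import Mathlib

section
/- Let N ≥ 3, α > 0, and let Ω ⊆ ℝ^N be open with 0 ∉ closure(Ω). Let 2 ≤ p < 2 + 4/α, set β = (N−2)α(p−2)/4 and ℓ = √( (p−2)²/(4(p−1)) + (p(p−2)/4) · (2 + 4/α − p)^{−1} ). Then for every smooth compactly supported function u : Ω → ℂ, the integral I(u) = ∫_Ω (−Δu(x)) · conj(u(x)) · |u(x)|^{p−2} · |x|^{−β} dx satisfies | Im I(u) | ≤ ℓ · Re I(u); in particular Re I(u) ≥ 0. -/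
open MeasureTheory

/-!
Write `β = m θ` with `m = dim - 2` and `0 ≤ θ < 1`. Integration by parts turns the form into the
integral of `∑ i, ⟪∂ᵢ (|x| ^ (-β) |u| ^ (p - 2) u), ∂ᵢ u⟫`. This density need not lie in a sector:
differentiating the weight produces a term of no definite sign. As in the proof of Hardy's
inequality, one may add a multiple of the divergence of the vector field
`|u| ^ p |x| ^ (-β - 2) x`, whose integral vanishes. With the factor `m θ / p` the sum splits over
the directions `i`, and, up to a nonnegative weight, each part has the real part
`B + (p - 1) a ^ 2 + θ (1 - θ) / p * d ^ 2` with `B ≥ b ^ 2` and the imaginary part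
`b ((p - 2) a - θ d)`, where `a + i b = ⟪u, ∂ᵢ u⟫` and `d = m |u| ^ 2 xᵢ / |x| ^ 2`. Cauchy–Schwarz
in the two variables `a`, `d` puts it in the sector of slope `ℓ`, with `4 ℓ ^ 2` equal to
`(p - 2) ^ 2 / (p - 1) + p θ / (1 - θ)`.
-/

open scoped Topology InnerProductSpace Laplacian

section NormPower

variable {E F : Type*} [NormedAddCommGroup E] [InnerProductSpace ℝ E]
  [NormedAddCommGroup F] [NormedSpace ℝ F]

theorem hasFDerivAt_norm_rpow_of_ne_zero {x : E} (hx : x ≠ 0) (s : ℝ) :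
    HasFDerivAt (fun y : E ↦ ‖y‖ ^ s) ((s * ‖x‖ ^ (s - 2)) • innerSL ℝ x) x := by
  apply HasStrictFDerivAt.hasFDerivAt
  convert! (hasStrictFDerivAt_norm_sq x).rpow_const (p := s / 2) (by simp [hx]) using 0
  simp_rw [← Real.rpow_natCast_mul (norm_nonneg _), ← Nat.cast_smul_eq_nsmul ℝ, smul_smul]
  ring_nf

theorem hasFDerivAt_norm_rpow_smul_self {q : ℝ} (hq : 0 ≤ q) (x : E) :
    HasFDerivAt (fun y : E ↦ ‖y‖ ^ q • y)
      (‖x‖ ^ q • .id ℝ E + (q * ‖x‖ ^ (q - 2)) • (innerSL ℝ x).smulRight x) x := by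
  rcases eq_or_ne x 0 with rfl | hx
  · rcases hq.eq_or_lt with rfl | hq
    · simpa [Function.id_def] using hasFDerivAt_id (𝕜 := ℝ) (0 : E)
    have h : (fun y : E ↦ ‖y‖ ^ q) =o[𝓝 0] fun _ ↦ (1 : ℝ) := by
      rw [Asymptotics.isLittleO_one_iff]
      simpa [Real.zero_rpow hq.ne'] using
        (continuous_norm.rpow_const (p := q) fun _ : E ↦ Or.inr hq.le).tendsto 0
    rw [hasFDerivAt_iff_isLittleO_nhds_zero]
    simpa [Real.zero_rpow hq.ne'] using h.smul_isBigO (Asymptotics.isBigO_refl id (𝓝 (0 : E)))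
  · refine ((hasFDerivAt_norm_rpow_of_ne_zero hx q).smul (hasFDerivAt_id x)).congr_fderiv ?_
    ext v
    simp [smul_smul]

theorem norm_norm_rpow_smul_innerSL_smulRight_self {q : ℝ} (hq : 0 < q) (x : E) :
    ‖(q * ‖x‖ ^ (q - 2)) • (innerSL ℝ x).smulRight x‖ = q * ‖x‖ ^ q := by
  rw [norm_smul, ContinuousLinearMap.norm_smulRight_apply, innerSL_apply_norm,
    Real.norm_of_nonneg (by positivity), mul_assoc, ← sq,
    ← Real.rpow_add_natCast' (norm_nonneg x) (by simpa using hq.ne')]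
  simp

theorem contDiff_norm_rpow_smul_self {q : ℝ} (hq : 0 ≤ q) :
    ContDiff ℝ 1 fun y : E ↦ ‖y‖ ^ q • y := by
  rcases hq.eq_or_lt with rfl | hq
  · simpa [Function.id_def] using contDiff_id (𝕜 := ℝ) (E := E)
  have hcont : Continuous fun y : E ↦ ‖y‖ ^ q := continuous_norm.rpow_const fun _ ↦ Or.inr hq.le
  refine contDiff_one_iff_hasFDerivAt.mpr
    ⟨_, (hcont.smul continuous_const).add (continuous_iff_continuousAt.mpr fun x ↦ ?_),
      hasFDerivAt_norm_rpow_smul_self hq.le⟩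
  rcases eq_or_ne x 0 with rfl | hx
  · have hlim : Filter.Tendsto (fun y : E ↦ q * ‖y‖ ^ q) (𝓝 0) (𝓝 0) := by
      simpa [Real.zero_rpow hq.ne'] using (hcont.const_mul q).tendsto 0
    simpa [ContinuousAt] using
      squeeze_zero_norm (fun y ↦ (norm_norm_rpow_smul_innerSL_smulRight_self hq y).le) hlim
  · have hright : Continuous fun y : E ↦ (innerSL ℝ y).smulRight y := by fun_prop
    have hcoeff : ContinuousAt (fun y : E ↦ q * ‖y‖ ^ (q - 2)) x := by
      fun_prop (discharger := simp [hx])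
    exact hcoeff.smul hright.continuousAt

theorem contDiff_norm_rpow_smul_of_zero_notMem_tsupport {n : WithTop ℕ∞} {φ : E → F}
    (hφ : ContDiff ℝ n φ) (h0 : (0 : E) ∉ tsupport φ) (s : ℝ) :
    ContDiff ℝ n fun x ↦ ‖x‖ ^ s • φ x := by
  refine contDiff_iff_contDiffAt.mpr fun x ↦ ?_
  rcases eq_or_ne x 0 with rfl | hx
  · have h : (fun x ↦ ‖x‖ ^ s • φ x) =ᶠ[𝓝 0] fun _ ↦ 0 := by
      filter_upwards [notMem_tsupport_iff_eventuallyEq.mp h0] with x hx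
      simp [hx]
    exact contDiffAt_const.congr_of_eventuallyEq h
  · exact ((contDiffAt_norm ℝ hx).rpow_const_of_ne (norm_ne_zero_iff.mpr hx)).smul hφ.contDiffAt

theorem fderiv_norm_rpow_smul_apply {φ : E → F} (hφ : Differentiable ℝ φ)
    (h0 : (0 : E) ∉ tsupport φ) (s : ℝ) (x v : E) :
    fderiv ℝ (fun x ↦ ‖x‖ ^ s • φ x) x v =
      ‖x‖ ^ s • fderiv ℝ φ x v + (s * ‖x‖ ^ (s - 2) * ⟪x, v⟫_ℝ) • φ x := by
  rcases eq_or_ne x 0 with rfl | hx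
  · have hφ0 : fderiv ℝ φ 0 = 0 :=
      image_eq_zero_of_notMem_tsupport fun h ↦ h0 (tsupport_fderiv_subset ℝ h)
    have hsmul0 : fderiv ℝ (fun x ↦ ‖x‖ ^ s • φ x) 0 = 0 :=
      image_eq_zero_of_notMem_tsupport fun h ↦
        h0 (tsupport_smul_subset_right _ _ (tsupport_fderiv_subset ℝ h))
    simp [hφ0, hsmul0]
  · have h : HasFDerivAt (fun x ↦ ‖x‖ ^ s • φ x) _ x :=
      (hasFDerivAt_norm_rpow_of_ne_zero hx s).smul (hφ x).hasFDerivAt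
    rw [h.fderiv]
    simp

theorem fderiv_norm_rpow_smul_apply_self {φ : E → F} (hφ : Differentiable ℝ φ)
    (h0 : (0 : E) ∉ tsupport φ) (s : ℝ) (x : E) :
    fderiv ℝ (fun x ↦ ‖x‖ ^ s • φ x) x x = ‖x‖ ^ s • (fderiv ℝ φ x x + s • φ x) := by
  have hpow : s * ‖x‖ ^ (s - 2) * ⟪x, x⟫_ℝ = ‖x‖ ^ s * s := by
    rcases eq_or_ne s 0 with rfl | hs
    · simp
    · rw [real_inner_self_eq_norm_sq, mul_assoc,
        ← Real.rpow_add_natCast' (norm_nonneg x) (by simpa using hs)]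
      simp [mul_comm]
  rw [fderiv_norm_rpow_smul_apply hφ h0, hpow, mul_smul, smul_add]

theorem rpow_eq_rpow_sub_two_mul_sq {r : ℝ} (hr : r ≠ 0) (s : ℝ) : r ^ s = r ^ (s - 2) * r ^ 2 := by
  rw [← Real.rpow_add_natCast hr, Nat.cast_ofNat, sub_add_cancel]

end NormPower

theorem continuous_fderiv_apply_const {E F : Type*} [NormedAddCommGroup E] [NormedSpace ℝ E]
    [NormedAddCommGroup F] [NormedSpace ℝ F] {f : E → F} (hf : ContDiff ℝ 1 f) (v : E) :
    Continuous fun x ↦ fderiv ℝ f x v :=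
  (hf.continuous_fderiv one_ne_zero).clm_apply continuous_const

theorem contDiff_fderiv_apply_const {E F : Type*} [NormedAddCommGroup E] [NormedSpace ℝ E]
    [NormedAddCommGroup F] [NormedSpace ℝ F] {f : E → F} (hf : ContDiff ℝ 2 f) (v : E) :
    ContDiff ℝ 1 fun x ↦ fderiv ℝ f x v :=
  (hf.fderiv_right (by norm_num [one_add_one_eq_two])).clm_apply contDiff_const

theorem laplacian_eq_sum_fderiv_fderiv {ι E F : Type*} [Fintype ι]
    [NormedAddCommGroup E] [InnerProductSpace ℝ E] [FiniteDimensional ℝ E] [NormedAddCommGroup F]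
    [NormedSpace ℝ F] (b : OrthonormalBasis ι ℝ E) {u : E → F}
    (hu : ContDiff ℝ 2 u) (x : E) :
    Δ u x = ∑ i, fderiv ℝ (fun y ↦ fderiv ℝ u y (b i)) x (b i) := by
  have hdiff : Differentiable ℝ (fderiv ℝ u) :=
    (hu.fderiv_right (m := 1) (by norm_num [one_add_one_eq_two])).differentiable one_ne_zero
  simp [InnerProductSpace.laplacian_eq_iteratedFDeriv_orthonormalBasis u b,
    iteratedFDeriv_two_apply, fderiv_clm_apply (hdiff x) (differentiableAt_const _)]

section IntegrationByParts

open Module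

variable {E F G W : Type*} [NormedAddCommGroup F] [NormedSpace ℝ F]
  [NormedAddCommGroup G] [NormedSpace ℝ G] [NormedAddCommGroup W] [NormedSpace ℝ W]
  [NormedAddCommGroup E] [MeasurableSpace E] [BorelSpace E]

theorem integrable_bilin_of_hasCompactSupport_left
    {μ : Measure E} [IsFiniteMeasureOnCompacts μ] (B : F →L[ℝ] G →L[ℝ] W) {f : E → F} {g : E → G}
    (hf : Continuous f) (hfc : HasCompactSupport f) (hg : Continuous g) :
    Integrable (fun x ↦ B (f x) (g x)) μ :=
  Continuous.integrable_of_hasCompactSupport (by fun_prop)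
    (hfc.mono fun x hx hfx ↦ hx (by simp [hfx]))

theorem integrable_fderiv_apply_self [NormedSpace ℝ E] {μ : Measure E} [IsFiniteMeasureOnCompacts μ]
    {f : E → F} (hf : ContDiff ℝ 1 f) (hfc : HasCompactSupport f) :
    Integrable (fun x ↦ fderiv ℝ f x x) μ :=
  ((hf.continuous_fderiv one_ne_zero).clm_apply continuous_id).integrable_of_hasCompactSupport
    ((hfc.fderiv ℝ).mono fun x hx hfx ↦ hx (by simp [hfx]))

section NormedSpace

variable [NormedSpace ℝ E] [FiniteDimensional ℝ E] (μ : Measure E) [μ.IsAddHaarMeasure]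

theorem integral_bilin_fderiv_eq_neg_of_hasCompactSupport_left (B : F →L[ℝ] G →L[ℝ] W)
    {f : E → F} {g : E → G} (hf : ContDiff ℝ 1 f) (hfc : HasCompactSupport f)
    (hg : ContDiff ℝ 1 g) (v : E) :
    ∫ x, B (f x) (fderiv ℝ g x v) ∂μ = -∫ x, B (fderiv ℝ f x v) (g x) ∂μ :=
  integral_bilinear_fderiv_right_eq_neg_left_of_integrable
    (integrable_bilin_of_hasCompactSupport_left B (continuous_fderiv_apply_const hf v)
      (hfc.fderiv_apply (𝕜 := ℝ) v) hg.continuous)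
    (integrable_bilin_of_hasCompactSupport_left B hf.continuous hfc
      (continuous_fderiv_apply_const hg v))
    (integrable_bilin_of_hasCompactSupport_left B hf.continuous hfc hg.continuous)
    (fun x _ ↦ hf.differentiable one_ne_zero x) (fun x _ ↦ hg.differentiable one_ne_zero x)

-- Sum the integrations by parts of `x i * ∂ i f` over the coordinates `x i`.
theorem integral_fderiv_apply_self {f : E → F} (hf : ContDiff ℝ 1 f) (hfc : HasCompactSupport f) :
    ∫ x, fderiv ℝ f x x ∂μ = -(finrank ℝ E : ℝ) • ∫ x, f x ∂μ := by
  let b := finBasis ℝ E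
  let coord (i) : E →L[ℝ] ℝ := (b.coord i).toContinuousLinearMap
  have hcoord (i) : ∫ x, coord i x • fderiv ℝ f x (b i) ∂μ = -∫ x, f x ∂μ := by
    have h := integral_bilin_fderiv_eq_neg_of_hasCompactSupport_left μ
      (.flip (.lsmul ℝ ℝ)) hf hfc (coord i).contDiff (b i)
    have hcoord_self : coord i (b i) = 1 := by simp [coord]
    simpa only [ContinuousLinearMap.lsmul_flip_apply, ContinuousLinearMap.fderiv, hcoord_self,
      ContinuousLinearMap.toSpanSingleton_apply, one_smul, neg_neg] using congrArg Neg.neg h.symm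
  have hint (i) : Integrable (fun x ↦ coord i x • fderiv ℝ f x (b i)) μ :=
    integrable_bilin_of_hasCompactSupport_left (.flip (.lsmul ℝ ℝ))
      (continuous_fderiv_apply_const hf _)
      (hfc.fderiv_apply (𝕜 := ℝ) _) (coord i).continuous
  calc ∫ x, fderiv ℝ f x x ∂μ = ∫ x, ∑ i, coord i x • fderiv ℝ f x (b i) ∂μ := by
        congr with x
        simp only [← map_smul, ← map_sum]
        exact congrArg _ (b.sum_repr x).symm
    _ = -(finrank ℝ E : ℝ) • ∫ x, f x ∂μ := by
        rw [integral_finsetSum _ fun i _ ↦ hint i, Finset.sum_congr rfl fun i _ ↦ hcoord i]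
        simp [Nat.cast_smul_eq_nsmul ℝ]

end NormedSpace

section InnerProductSpace

variable [InnerProductSpace ℝ E] [FiniteDimensional ℝ E]

theorem integral_bilin_laplacian_eq_neg {ι : Type*} [Fintype ι] (b : OrthonormalBasis ι ℝ E)
    (μ : Measure E) [μ.IsAddHaarMeasure] (B : F →L[ℝ] G →L[ℝ] W)
    {f : E → F} {u : E → G} (hf : ContDiff ℝ 1 f) (hfc : HasCompactSupport f)
    (hu : ContDiff ℝ 2 u) :
    ∫ x, B (f x) (Δ u x) ∂μ =
      -∫ x, ∑ i, B (fderiv ℝ f x (b i)) (fderiv ℝ u x (b i)) ∂μ := by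
  have hu' (i) : ContDiff ℝ 1 fun y ↦ fderiv ℝ u y (b i) := contDiff_fderiv_apply_const hu _
  have hint₁ (i) : Integrable (fun x ↦ B (f x) (fderiv ℝ (fun y ↦ fderiv ℝ u y (b i)) x (b i))) μ :=
    integrable_bilin_of_hasCompactSupport_left B hf.continuous hfc
      (continuous_fderiv_apply_const (hu' i) _)
  have hint₂ (i) : Integrable (fun x ↦ B (fderiv ℝ f x (b i)) (fderiv ℝ u x (b i))) μ :=
    integrable_bilin_of_hasCompactSupport_left B (continuous_fderiv_apply_const hf _)
      (hfc.fderiv_apply (𝕜 := ℝ) _) (hu' i).continuous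
  simp_rw [laplacian_eq_sum_fderiv_fderiv b hu, map_sum]
  rw [integral_finsetSum _ fun i _ ↦ hint₁ i, integral_finsetSum _ fun i _ ↦ hint₂ i,
    ← Finset.sum_neg_distrib]
  exact Finset.sum_congr rfl fun i _ ↦
    integral_bilin_fderiv_eq_neg_of_hasCompactSupport_left μ B hf hfc (hu' i) (b i)

end InnerProductSpace

end IntegrationByParts

section WeightedDuality

variable {E F : Type*} [NormedAddCommGroup E]

/-- The duality map `u ↦ |u| ^ (p - 2) u` of `L ^ p`, weighted by `|x| ^ (-β)`. -/
noncomputable def weightedDuality [NormedAddCommGroup F] [NormedSpace ℝ F] (p β : ℝ) (u : E → F)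
    (x : E) : F :=
  ‖x‖ ^ (-β) • ‖u x‖ ^ (p - 2) • u x

theorem hasCompactSupport_weightedDuality [NormedAddCommGroup F] [NormedSpace ℝ F] (p β : ℝ)
    {u : E → F} (hu : HasCompactSupport u) :
    HasCompactSupport (weightedDuality p β u) :=
  hu.smul_left.smul_left

variable [InnerProductSpace ℝ E] [NormedAddCommGroup F] [InnerProductSpace ℝ F]

theorem contDiff_weightedDuality {p β : ℝ} (hp : 2 ≤ p) {u : E → F} (hu : ContDiff ℝ 1 u)
    (h0 : (0 : E) ∉ tsupport u) : ContDiff ℝ 1 (weightedDuality p β u) :=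
  contDiff_norm_rpow_smul_of_zero_notMem_tsupport
    ((contDiff_norm_rpow_smul_self (sub_nonneg.mpr hp)).comp hu)
    (fun h ↦ h0 (tsupport_smul_subset_right _ _ h)) _

theorem fderiv_weightedDuality_apply {p β : ℝ} (hp : 2 ≤ p) {u : E → F} (hu : Differentiable ℝ u)
    (h0 : (0 : E) ∉ tsupport u) (x v : E) :
    fderiv ℝ (weightedDuality p β u) x v =
      ‖x‖ ^ (-β) • (‖u x‖ ^ (p - 2) • fderiv ℝ u x v +
        ((p - 2) * ‖u x‖ ^ (p - 2 - 2) * ⟪u x, fderiv ℝ u x v⟫_ℝ) • u x) +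
      (-β * ‖x‖ ^ (-β - 2) * ⟪x, v⟫_ℝ) • ‖u x‖ ^ (p - 2) • u x := by
  have hpow (x) : HasFDerivAt (fun x ↦ ‖u x‖ ^ (p - 2) • u x) _ x :=
    (hasFDerivAt_norm_rpow_smul_self (sub_nonneg.mpr hp) (u x)).comp x (hu x).hasFDerivAt
  refine (fderiv_norm_rpow_smul_apply (fun x ↦ (hpow x).differentiableAt)
    (fun h ↦ h0 (tsupport_smul_subset_right _ _ h)) _ x v).trans ?_
  simp [(hpow x).fderiv, smul_smul]

end WeightedDuality

section Hardy

variable {E F : Type*} [NormedAddCommGroup E] [NormedAddCommGroup F] {p θ β : ℝ} {u : E → F}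

/-- The density `|u| ^ p / |x| ^ (β + 2)` of the weighted Hardy inequality. It multiplies the
position vector in the vector field whose divergence is added to the form. -/
noncomputable def hardyPotential (p β : ℝ) (u : E → F) (x : E) : ℝ :=
  ‖x‖ ^ (-β - 2) • ‖u x‖ ^ p

theorem hasCompactSupport_hardyPotential (hp : p ≠ 0) (hu : HasCompactSupport u) :
    HasCompactSupport (hardyPotential p β u) :=
  (hu.comp_left (g := fun z : F ↦ ‖z‖ ^ p) (by simp [hp])).smul_left (f := fun x ↦ ‖x‖ ^ (-β - 2))

theorem tsupport_norm_rpow_subset (hp : p ≠ 0) : tsupport (fun x ↦ ‖u x‖ ^ p) ⊆ tsupport u :=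
  tsupport_comp_subset (g := fun z : F ↦ ‖z‖ ^ p) (by simp [hp]) u

variable [InnerProductSpace ℝ E] [InnerProductSpace ℝ F]

theorem contDiff_hardyPotential (hp : 1 < p) (hu : ContDiff ℝ 1 u) (h0 : (0 : E) ∉ tsupport u) :
    ContDiff ℝ 1 (hardyPotential p β u) :=
  contDiff_norm_rpow_smul_of_zero_notMem_tsupport (hu.norm_rpow hp)
    (fun h ↦ h0 (tsupport_norm_rpow_subset (by linarith) h)) _

theorem fderiv_hardyPotential_apply_self (hp : 1 < p) (hu : Differentiable ℝ u)
    (h0 : (0 : E) ∉ tsupport u) (x : E) :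
    fderiv ℝ (hardyPotential p β u) x x =
      ‖x‖ ^ (-β - 2) * (p * ‖u x‖ ^ (p - 2) * ⟪u x, fderiv ℝ u x x⟫_ℝ - (β + 2) * ‖u x‖ ^ p) := by
  refine (fderiv_norm_rpow_smul_apply_self (hu.norm_rpow hp)
    (fun h ↦ h0 (tsupport_norm_rpow_subset (by linarith) h)) _ x).trans ?_
  simp only [hu.fderiv_norm_rpow hp, smul_apply,
    ContinuousLinearMap.comp_apply, innerSL_apply_apply, smul_eq_mul]
  ring

/-- The part in direction `v` of `m θ / p` times the divergence of
`x ↦ hardyPotential p (m * θ) u x • x` in dimension `m + 2`, which makes the density of the form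
sectorial in each direction separately. -/
noncomputable def hardyDensity (p θ m : ℝ) (u : E → F) (x v : E) : ℝ :=
  ‖x‖ ^ (-(m * θ)) * ‖u x‖ ^ (p - 2 - 2) *
    (θ * (m * (‖u x‖ ^ 2 * ⟪x, v⟫_ℝ / ‖x‖ ^ 2)) * ⟪u x, fderiv ℝ u x v⟫_ℝ +
      θ * (1 - θ) / p * (m * (‖u x‖ ^ 2 * ⟪x, v⟫_ℝ / ‖x‖ ^ 2)) ^ 2)

theorem sum_hardyDensity {ι : Type*} [Fintype ι] (b : OrthonormalBasis ι ℝ E) (hp : 1 < p) (m : ℝ)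
    (hu : Differentiable ℝ u) (h0 : (0 : E) ∉ tsupport u) (x : E) :
    ∑ i, hardyDensity p θ m u x (b i) =
      m * θ / p * (fderiv ℝ (hardyPotential p (m * θ) u) x x +
        (m + 2) * hardyPotential p (m * θ) u x) := by
  rw [fderiv_hardyPotential_apply_self hp hu h0]
  rcases eq_or_ne (u x) 0 with hx | hx
  · simp [hardyDensity, hardyPotential, hx, show p ≠ 0 by linarith]
  have hx0 : ‖x‖ ≠ 0 := norm_ne_zero_iff.mpr fun h ↦ h0 (subset_tsupport u (h ▸ hx))
  have hux : ‖u x‖ ≠ 0 := norm_ne_zero_iff.mpr hx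
  have hpow : ‖u x‖ ^ (p - 2) = ‖u x‖ ^ (p - 2 - 2) * ‖u x‖ ^ 2 :=
    rpow_eq_rpow_sub_two_mul_sq hux _
  have hpow' : ‖u x‖ ^ p = ‖u x‖ ^ (p - 2) * ‖u x‖ ^ 2 :=
    rpow_eq_rpow_sub_two_mul_sq hux _
  have hpowx : ‖x‖ ^ (-(m * θ) - 2) = ‖x‖ ^ (-(m * θ)) / ‖x‖ ^ 2 := by
    exact_mod_cast Real.rpow_sub_natCast hx0 (-(m * θ)) 2
  have hradial : ⟪u x, fderiv ℝ u x x⟫_ℝ = ∑ i, ⟪x, b i⟫_ℝ * ⟪u x, fderiv ℝ u x (b i)⟫_ℝ := by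
    calc _ = ⟪u x, fderiv ℝ u x (∑ i, ⟪b i, x⟫_ℝ • b i)⟫_ℝ := by rw [b.sum_repr' x]
      _ = _ := by
        simp only [map_sum, map_smul, inner_sum, real_inner_smul_right, real_inner_comm x]
  have hparseval : ∑ i, ⟪x, b i⟫_ℝ ^ 2 = ‖x‖ ^ 2 := b.sum_sq_inner_left x
  have hterm (i) : hardyDensity p θ m u x (b i) = ‖x‖ ^ (-(m * θ)) * ‖u x‖ ^ (p - 2 - 2) *
      (m * θ * ‖u x‖ ^ 2 / ‖x‖ ^ 2 * (⟪x, b i⟫_ℝ * ⟪u x, fderiv ℝ u x (b i)⟫_ℝ) +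
        θ * (1 - θ) / p * m ^ 2 * ‖u x‖ ^ 4 / ‖x‖ ^ 4 * ⟪x, b i⟫_ℝ ^ 2) := by
    rw [hardyDensity]
    ring
  simp_rw [hterm, ← Finset.mul_sum, Finset.sum_add_distrib, ← Finset.mul_sum]
  rw [hparseval, ← hradial, hardyPotential, smul_eq_mul, hpow', hpow, hpowx]
  field_simp
  ring

section Integral

open Module

variable [MeasurableSpace E] [BorelSpace E] {ι : Type*} [Fintype ι] (b : OrthonormalBasis ι ℝ E)

theorem integrable_sum_hardyDensity {μ : Measure E} [IsFiniteMeasureOnCompacts μ] (hp : 1 < p)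
    (m : ℝ) (hu : ContDiff ℝ 1 u) (huc : HasCompactSupport u) (h0 : (0 : E) ∉ tsupport u) :
    Integrable (fun x ↦ ∑ i, hardyDensity p θ m u x (b i)) μ := by
  have hg := contDiff_hardyPotential (β := m * θ) hp hu h0
  have hgc := hasCompactSupport_hardyPotential (β := m * θ) (by linarith) huc
  simp_rw [sum_hardyDensity b hp m (hu.differentiable one_ne_zero) h0]
  exact ((integrable_fderiv_apply_self hg hgc).add
    ((hg.continuous.integrable_of_hasCompactSupport hgc).const_mul _)).const_mul _

theorem integral_sum_hardyDensity_eq_zero [FiniteDimensional ℝ E] (μ : Measure E)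
    [μ.IsAddHaarMeasure] (hp : 1 < p) (hu : ContDiff ℝ 1 u) (huc : HasCompactSupport u)
    (h0 : (0 : E) ∉ tsupport u) :
    ∫ x, ∑ i, hardyDensity p θ (finrank ℝ E - 2) u x (b i) ∂μ = 0 := by
  have hg := contDiff_hardyPotential (β := (finrank ℝ E - 2) * θ) hp hu h0
  have hgc := hasCompactSupport_hardyPotential (β := (finrank ℝ E - 2) * θ) (by linarith) huc
  simp_rw [sum_hardyDensity b hp _ (hu.differentiable one_ne_zero) h0]
  rw [integral_const_mul, integral_add (integrable_fderiv_apply_self hg hgc)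
    ((hg.continuous.integrable_of_hasCompactSupport hgc).const_mul _),
    integral_fderiv_apply_self μ hg hgc, integral_const_mul]
  simp

end Integral

end Hardy

section Sector

/-- The closed sector `|Im z| ≤ ℓ Re z` around the nonnegative real axis, as a convex cone. The
condition `0 ≤ Re z` is listed separately because the first one does not imply it for `ℓ = 0`. -/
def sector (ℓ : ℝ) : PointedCone ℝ ℂ where
  carrier := {z | |z.im| ≤ ℓ * z.re ∧ 0 ≤ z.re}
  zero_mem' := by simp
  add_mem' := fun hz hw ↦ by
    rw [Set.mem_ofPred_eq, Complex.add_im, Complex.add_re, mul_add]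
    exact ⟨(abs_add_le _ _).trans (add_le_add hz.1 hw.1), add_nonneg hz.2 hw.2⟩
  smul_mem' := by
    rintro ⟨c, hc⟩ z hz
    rw [Nonneg.mk_smul, Set.mem_ofPred_eq, Complex.smul_im, Complex.smul_re, smul_eq_mul,
      smul_eq_mul, abs_mul, abs_of_nonneg hc, mul_left_comm ℓ]
    exact ⟨mul_le_mul_of_nonneg_left hz.1 hc, mul_nonneg hc hz.2⟩

variable {ℓ : ℝ}

theorem mem_sector {z : ℂ} : z ∈ sector ℓ ↔ |z.im| ≤ ℓ * z.re ∧ 0 ≤ z.re := Iff.rfl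

theorem ofReal_mem_sector (hℓ : 0 ≤ ℓ) {r : ℝ} (hr : 0 ≤ r) : (r : ℂ) ∈ sector ℓ := by
  simpa [mem_sector, hr] using mul_nonneg hℓ hr

theorem integral_mem_sector {X : Type*} [MeasurableSpace X] {μ : Measure X} {f : X → ℂ}
    (hf : Integrable f μ) (h : ∀ x, f x ∈ sector ℓ) : ∫ x, f x ∂μ ∈ sector ℓ := by
  have hre : (∫ x, f x ∂μ).re = ∫ x, (f x).re ∂μ := (integral_re hf).symm
  have him : (∫ x, f x ∂μ).im = ∫ x, (f x).im ∂μ := (integral_im hf).symm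
  rw [mem_sector, hre, him, ← integral_const_mul]
  exact ⟨abs_integral_le_integral_abs.trans
    (integral_mono hf.im.abs (hf.re.const_mul ℓ) fun x ↦ (h x).1), integral_nonneg fun x ↦ (h x).2⟩

/-- The slope `ℓ` of the sector containing the form `∫ ⟪|x| ^ (-β) |u| ^ (p - 2) u, -Δ u⟫`, where
`β = (dim - 2) θ`. -/
noncomputable def sectorSlope (p θ : ℝ) : ℝ :=
  √((p - 2) ^ 2 / (4 * (p - 1)) + p * θ / (4 * (1 - θ)))

variable {p θ : ℝ}

theorem sectorSlope_nonneg (p θ : ℝ) : 0 ≤ sectorSlope p θ := Real.sqrt_nonneg _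

theorem abs_mul_le_mul_sq_add_of_sq_le {x y : ℝ} (hℓ : 0 ≤ ℓ) (hy : 0 ≤ y)
    (hxy : x ^ 2 ≤ 4 * ℓ ^ 2 * y) (b : ℝ) : |b * x| ≤ ℓ * (b ^ 2 + y) := by
  refine abs_le_of_sq_le_sq ?_ (by positivity)
  calc (b * x) ^ 2 = b ^ 2 * x ^ 2 := mul_pow b x 2
    _ ≤ b ^ 2 * (4 * ℓ ^ 2 * y) := by gcongr
    _ = ℓ ^ 2 * (4 * b ^ 2 * y) := by ring
    _ ≤ ℓ ^ 2 * (b ^ 2 + y) ^ 2 := by gcongr; exact four_mul_le_sq_add (b ^ 2) y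
    _ = (ℓ * (b ^ 2 + y)) ^ 2 := (mul_pow _ _ 2).symm

-- Cauchy–Schwarz in `ℝ²`; the slope is chosen so that the constant is sharp.
theorem sq_sub_le_four_mul_sectorSlope_sq_mul (hp : 1 < p) (hθ₀ : 0 ≤ θ) (hθ₁ : θ < 1) (a d : ℝ) :
    ((p - 2) * a - θ * d) ^ 2 ≤
      4 * sectorSlope p θ ^ 2 * ((p - 1) * a ^ 2 + θ * (1 - θ) / p * d ^ 2) := by
  have hp₁ : 0 < p - 1 := sub_pos.mpr hp
  have hη : 0 < 1 - θ := sub_pos.mpr hθ₁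
  have hslope : sectorSlope p θ ^ 2 = (p - 2) ^ 2 / (4 * (p - 1)) + p * θ / (4 * (1 - θ)) :=
    Real.sq_sqrt (by positivity)
  have hdefect : 4 * sectorSlope p θ ^ 2 * ((p - 1) * a ^ 2 + θ * (1 - θ) / p * d ^ 2) -
      ((p - 2) * a - θ * d) ^ 2 =
      p * θ * (p - 1) / (1 - θ) * (a + (p - 2) * (1 - θ) / (p * (p - 1)) * d) ^ 2 := by
    rw [hslope]
    field_simp
    ring
  rw [← sub_nonneg, hdefect]
  positivity

theorem add_mul_self_add_mem_sector (hp : 2 ≤ p) (hθ₀ : 0 ≤ θ) (hθ₁ : θ < 1) {s : ℝ} {ζ : ℂ}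
    (hs : ‖ζ‖ ^ 2 ≤ s) (d : ℝ) :
    (s : ℂ) + ((p - 2) * ζ.re - θ * d : ℝ) * ζ + (θ * d * ζ.re + θ * (1 - θ) / p * d ^ 2 : ℝ) ∈
      sector (sectorSlope p θ) := by
  have hy : 0 ≤ (p - 1) * ζ.re ^ 2 + θ * (1 - θ) / p * d ^ 2 := by
    have : 0 ≤ p - 1 := by linarith
    have : 0 ≤ 1 - θ := by linarith
    positivity
  have hζ : ζ.im ^ 2 ≤ s - ζ.re ^ 2 := by
    rw [Complex.sq_norm, Complex.normSq_apply] at hs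
    linarith
  have hre : ((s : ℂ) + ((p - 2) * ζ.re - θ * d : ℝ) * ζ +
      (θ * d * ζ.re + θ * (1 - θ) / p * d ^ 2 : ℝ)).re =
      s - ζ.re ^ 2 + ((p - 1) * ζ.re ^ 2 + θ * (1 - θ) / p * d ^ 2) := by
    simp only [Complex.add_re, Complex.re_ofReal_mul, Complex.ofReal_re]
    ring
  have him : ((s : ℂ) + ((p - 2) * ζ.re - θ * d : ℝ) * ζ +
      (θ * d * ζ.re + θ * (1 - θ) / p * d ^ 2 : ℝ)).im = ζ.im * ((p - 2) * ζ.re - θ * d) := by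
    simp only [Complex.add_im, Complex.im_ofReal_mul, Complex.ofReal_im]
    ring
  rw [mem_sector, hre, him]
  refine ⟨?_, add_nonneg ((sq_nonneg _).trans hζ) hy⟩
  calc |ζ.im * ((p - 2) * ζ.re - θ * d)|
      ≤ sectorSlope p θ * (ζ.im ^ 2 + ((p - 1) * ζ.re ^ 2 + θ * (1 - θ) / p * d ^ 2)) :=
      abs_mul_le_mul_sq_add_of_sq_le (sectorSlope_nonneg p θ) hy
        (sq_sub_le_four_mul_sectorSlope_sq_mul (by linarith) hθ₀ hθ₁ _ _) _
    _ ≤ _ := by gcongr; exact sectorSlope_nonneg p θ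

end Sector

section Form

open Module

attribute [local instance] InnerProductSpace.complexToReal

variable {E F : Type*} [NormedAddCommGroup E] [InnerProductSpace ℝ E]
  [NormedAddCommGroup F] [InnerProductSpace ℂ F] {p θ β : ℝ} {u : E → F}

theorem inner_fderiv_weightedDuality_of_eq_zero (hp : 2 ≤ p) (hu : Differentiable ℝ u)
    (h0 : (0 : E) ∉ tsupport u) {x : E} (hx : u x = 0) (v : E) :
    ⟪fderiv ℝ (weightedDuality p β u) x v, fderiv ℝ u x v⟫_ℂ =
      (‖x‖ ^ (-β) * 0 ^ (p - 2) * ‖fderiv ℝ u x v‖ ^ 2 : ℝ) := by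
  rw [fderiv_weightedDuality_apply hp hu h0, hx]
  simp only [norm_zero, inner_zero_left, mul_zero, smul_zero, add_zero,
    ← Complex.coe_smul, inner_smul_left, inner_self_eq_norm_sq_to_K, Complex.conj_ofReal,
    RCLike.ofReal_eq_complex_ofReal]
  push_cast
  ring

theorem inner_fderiv_weightedDuality_of_ne_zero (hp : 2 ≤ p) (hu : Differentiable ℝ u)
    (h0 : (0 : E) ∉ tsupport u) {x : E} (hx : u x ≠ 0) (v : E) :
    ⟪fderiv ℝ (weightedDuality p β u) x v, fderiv ℝ u x v⟫_ℂ =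
      (‖x‖ ^ (-β) * ‖u x‖ ^ (p - 2 - 2) : ℝ) * (((‖u x‖ * ‖fderiv ℝ u x v‖) ^ 2 : ℝ) +
        ((p - 2) * ⟪u x, fderiv ℝ u x v⟫_ℝ - β * (‖u x‖ ^ 2 * ⟪x, v⟫_ℝ / ‖x‖ ^ 2) : ℝ) *
          ⟪u x, fderiv ℝ u x v⟫_ℂ) := by
  have hx0 : 0 < ‖x‖ := norm_pos_iff.mpr fun h ↦ h0 (subset_tsupport u (h ▸ hx))
  have hpow : ‖u x‖ ^ (p - 2) = ‖u x‖ ^ (p - 2 - 2) * ‖u x‖ ^ 2 :=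
    rpow_eq_rpow_sub_two_mul_sq (norm_ne_zero_iff.mpr hx) _
  have hpowx : ‖x‖ ^ (-β - 2) = ‖x‖ ^ (-β) / ‖x‖ ^ 2 := by
    exact_mod_cast Real.rpow_sub_natCast hx0.ne' (-β) 2
  rw [fderiv_weightedDuality_apply hp hu h0, hpow, hpowx]
  simp only [← Complex.coe_smul, smul_smul, smul_add, inner_add_left, inner_smul_left,
    inner_self_eq_norm_sq_to_K, ← Complex.ofReal_mul, Complex.conj_ofReal,
    RCLike.ofReal_eq_complex_ofReal]
  push_cast
  ring

theorem inner_fderiv_weightedDuality_add_hardyDensity_mem_sector (hp : 2 ≤ p) (hθ₀ : 0 ≤ θ)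
    (hθ₁ : θ < 1) (m : ℝ) (hu : Differentiable ℝ u) (h0 : (0 : E) ∉ tsupport u) (x v : E) :
    ⟪fderiv ℝ (weightedDuality p (m * θ) u) x v, fderiv ℝ u x v⟫_ℂ + hardyDensity p θ m u x v ∈
      sector (sectorSlope p θ) := by
  rcases eq_or_ne (u x) 0 with hx | hx
  · rw [inner_fderiv_weightedDuality_of_eq_zero hp hu h0 hx]
    have hdensity : hardyDensity p θ m u x v = 0 := by simp [hardyDensity, hx]
    rw [hdensity, Complex.ofReal_zero, add_zero]
    exact ofReal_mem_sector (sectorSlope_nonneg p θ) (by positivity)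
  · have hweight : 0 ≤ ‖x‖ ^ (-(m * θ)) * ‖u x‖ ^ (p - 2 - 2) := by positivity
    have h := (sector (sectorSlope p θ)).smul_mem hweight
      (add_mul_self_add_mem_sector hp hθ₀ hθ₁
        (s := (‖u x‖ * ‖fderiv ℝ u x v‖) ^ 2) (ζ := ⟪u x, fderiv ℝ u x v⟫_ℂ)
        (by gcongr; exact norm_inner_le_norm _ _) (m * (‖u x‖ ^ 2 * ⟪x, v⟫_ℝ / ‖x‖ ^ 2)))
    have hre : (⟪u x, fderiv ℝ u x v⟫_ℂ).re = ⟪u x, fderiv ℝ u x v⟫_ℝ :=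
      (real_inner_eq_re_inner ℂ _ _).symm
    rw [inner_fderiv_weightedDuality_of_ne_zero hp hu h0 hx, hardyDensity]
    rw [Complex.real_smul, hre] at h
    convert! h using 1
    push_cast
    ring

variable [MeasurableSpace E]

theorem integrable_inner_fderiv_weightedDuality [BorelSpace E] {μ : Measure E}
    [IsFiniteMeasureOnCompacts μ] (hp : 2 ≤ p) (hu : ContDiff ℝ 1 u) (huc : HasCompactSupport u)
    (h0 : (0 : E) ∉ tsupport u) (v : E) :
    Integrable (fun x ↦ ⟪fderiv ℝ (weightedDuality p β u) x v, fderiv ℝ u x v⟫_ℂ) μ :=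
  integrable_bilin_of_hasCompactSupport_left
    (isBoundedBilinearMap_inner (𝕜 := ℂ)).toContinuousLinearMap
    (continuous_fderiv_apply_const (contDiff_weightedDuality hp hu h0) v)
    ((hasCompactSupport_weightedDuality p β huc).fderiv_apply (𝕜 := ℝ) v)
    (continuous_fderiv_apply_const hu v)

variable [FiniteDimensional ℝ E]

/-- The integral `∫ ⟪|x| ^ (-β) |u| ^ (p - 2) u, -Δ u⟫`, where the inner product is conjugate-linear
in its first argument. -/
noncomputable def laplacianForm (μ : Measure E) (p β : ℝ) (u : E → F) : ℂ :=
  ∫ x, ⟪weightedDuality p β u x, -Δ u x⟫_ℂ ∂μ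

variable [BorelSpace E] (μ : Measure E) [μ.IsAddHaarMeasure]

theorem laplacianForm_eq_integral_sum_inner_fderiv {ι : Type*} [Fintype ι]
    (b : OrthonormalBasis ι ℝ E) (hp : 2 ≤ p) (hu : ContDiff ℝ 2 u) (huc : HasCompactSupport u)
    (h0 : (0 : E) ∉ tsupport u) :
    laplacianForm μ p β u =
      ∫ x, ∑ i, ⟪fderiv ℝ (weightedDuality p β u) x (b i), fderiv ℝ u x (b i)⟫_ℂ ∂μ := by
  have hgreen := integral_bilin_laplacian_eq_neg b μ
    (isBoundedBilinearMap_inner (𝕜 := ℂ)).toContinuousLinearMap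
    (contDiff_weightedDuality (β := β) hp (hu.of_le one_le_two) h0)
    (hasCompactSupport_weightedDuality p β huc) hu
  simp only [IsBoundedBilinearMap.toContinuousLinearMap_apply] at hgreen
  simp only [laplacianForm, inner_neg_right, integral_neg, hgreen, neg_neg]

theorem stmt_8_general (hp : 2 ≤ p) (hθ₀ : 0 ≤ θ) (hθ₁ : θ < 1) (hu : ContDiff ℝ 2 u)
    (huc : HasCompactSupport u) (h0 : (0 : E) ∉ tsupport u) :
    laplacianForm μ p ((finrank ℝ E - 2) * θ) u ∈ sector (sectorSlope p θ) := by
  let b := stdOrthonormalBasis ℝ E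
  have hp₁ : 1 < p := one_lt_two.trans_le hp
  have hu₁ : ContDiff ℝ 1 u := hu.of_le one_le_two
  have henergy : Integrable (fun x ↦ ∑ i, ⟪fderiv ℝ (weightedDuality p ((finrank ℝ E - 2) * θ) u) x
      (b i), fderiv ℝ u x (b i)⟫_ℂ) μ :=
    integrable_finsetSum _ fun i _ ↦ integrable_inner_fderiv_weightedDuality hp hu₁ huc h0 (b i)
  have hhardy : Integrable
      (fun x ↦ ((∑ i, hardyDensity p θ (finrank ℝ E - 2) u x (b i) : ℝ) : ℂ)) μ :=
    (integrable_sum_hardyDensity b hp₁ _ hu₁ huc h0).ofReal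
  have hform : laplacianForm μ p ((finrank ℝ E - 2) * θ) u =
      ∫ x, (∑ i, ⟪fderiv ℝ (weightedDuality p ((finrank ℝ E - 2) * θ) u) x (b i),
        fderiv ℝ u x (b i)⟫_ℂ) + (∑ i, hardyDensity p θ (finrank ℝ E - 2) u x (b i) : ℝ) ∂μ := by
    rw [integral_add henergy hhardy, integral_complex_ofReal,
      integral_sum_hardyDensity_eq_zero b μ hp₁ hu₁ huc h0, Complex.ofReal_zero, add_zero,
      laplacianForm_eq_integral_sum_inner_fderiv μ b hp hu huc h0]
  rw [hform]
  refine integral_mem_sector (henergy.add hhardy) fun x ↦ ?_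
  rw [Complex.ofReal_sum, ← Finset.sum_add_distrib]
  exact sum_mem fun i _ ↦ inner_fderiv_weightedDuality_add_hardyDensity_mem_sector hp hθ₀ hθ₁ _
    (hu₁.differentiable one_ne_zero) h0 x (b i)

end Form

theorem mul_sub_two_div_four_lt_one {p α : ℝ} (hα : 0 < α) (hp : p < 2 + 4 / α) :
    α * (p - 2) / 4 < 1 := by
  have := (lt_div_iff₀ hα).mp (sub_left_lt_of_lt_add hp)
  linarith

theorem sectorSlope_eq {p α : ℝ} (hα : 0 < α) (hp : p < 2 + 4 / α) :
    sectorSlope p (α * (p - 2) / 4) =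
      √((p - 2) ^ 2 / (4 * (p - 1)) + p * (p - 2) / 4 * (2 + 4 / α - p)⁻¹) := by
  have hθ : 1 - α * (p - 2) / 4 ≠ 0 := (sub_pos.mpr (mul_sub_two_div_four_lt_one hα hp)).ne'
  have hgap : 2 + 4 / α - p = 4 * (1 - α * (p - 2) / 4) / α := by
    field_simp
    ring
  rw [sectorSlope, hgap]
  congr 2
  generalize 1 - α * (p - 2) / 4 = η at *
  field_simp

theorem setIntegral_eq_laplacianForm {N : ℕ} (p β : ℝ) {Ω : Set (EuclideanSpace ℝ (Fin N))}
    {u : EuclideanSpace ℝ (Fin N) → ℂ} (hu : ContDiff ℝ 2 u) (hΩ : tsupport u ⊆ Ω) :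
    ∫ x in Ω, (-(∑ i : Fin N, fderiv ℝ (fun z => fderiv ℝ u z (EuclideanSpace.single i 1)) x
        (EuclideanSpace.single i 1))) * (starRingEnd ℂ) (u x) *
          ((‖u x‖ ^ (p - 2) * ‖x‖ ^ (-β) : ℝ) : ℂ) =
      laplacianForm volume p β u := by
  rw [laplacianForm, setIntegral_eq_integral_of_forall_compl_eq_zero]
  · congr with x
    have hlaplacian := laplacian_eq_sum_fderiv_fderiv (EuclideanSpace.basisFun (Fin N) ℝ) hu x
    simp only [EuclideanSpace.basisFun_apply] at hlaplacian
    rw [← hlaplacian]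
    simp only [weightedDuality, Complex.real_smul, RCLike.inner_apply, map_mul,
      Complex.conj_ofReal, Complex.ofReal_mul]
    ring
  · intro x hx
    have hux : u x = 0 := image_eq_zero_of_notMem_tsupport fun h ↦ hx (hΩ h)
    simp [hux]

/-- sectoriality estimate. For `N ≥ 3`, `0 ∉ closure Ω`, `2 ≤ p < 2 + 4/α`,
`β = (N−2)α(p−2)/4`, `ℓ = √((p−2)²/(4(p−1)) + (p(p−2)/4)(2+4/α−p)⁻¹)`, and every smooth
compactly supported `u : Ω → ℂ`, the integral
`I(u) = ∫_Ω (−Δu) conj(u) |u|^{p−2} |x|^{−β} dx` satisfies `|Im I| ≤ ℓ Re I`; in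
particular `Re I ≥ 0`. -/
theorem stmt_8 (N : ℕ) (hN : 3 ≤ N) (α : ℝ) (hα : 0 < α)
    (Ω : Set (EuclideanSpace ℝ (Fin N))) (hΩ : IsOpen Ω)
    (h0 : (0 : EuclideanSpace ℝ (Fin N)) ∉ closure Ω)
    (p : ℝ) (hp2 : 2 ≤ p) (hp4 : p < 2 + 4 / α)
    (β ℓ : ℝ) (hβ : β = ((N : ℝ) - 2) * α * (p - 2) / 4)
    (hℓ : ℓ = Real.sqrt ((p - 2) ^ 2 / (4 * (p - 1)) + p * (p - 2) / 4 * (2 + 4 / α - p)⁻¹))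
    (u : EuclideanSpace ℝ (Fin N) → ℂ)
    (hu : ContDiff ℝ (⊤ : ℕ∞) u) (husupp : HasCompactSupport u) (husub : tsupport u ⊆ Ω)
    (I : ℂ)
    (hI : I = ∫ x in Ω,
        (-(∑ i : Fin N,
            fderiv ℝ (fun z => fderiv ℝ u z (EuclideanSpace.single i 1)) x
              (EuclideanSpace.single i 1)))
          * (starRingEnd ℂ) (u x)
          * ((‖u x‖ ^ (p - 2) * ‖x‖ ^ (-β) : ℝ) : ℂ)) :
    |I.im| ≤ ℓ * I.re ∧ 0 ≤ I.re := by
  have hu₂ : ContDiff ℝ 2 u := contDiff_infty.mp hu 2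
  have h0u : 0 ∉ tsupport u := fun h ↦ h0 (subset_closure (husub h))
  have hθ₀ : 0 ≤ α * (p - 2) / 4 := by have := sub_nonneg.mpr hp2; positivity
  have hβ' : β = (Module.finrank ℝ (EuclideanSpace ℝ (Fin N)) - 2) * (α * (p - 2) / 4) := by
    rw [hβ, finrank_euclideanSpace_fin]
    ring
  rw [hI, hℓ, ← sectorSlope_eq hα hp4, setIntegral_eq_laplacianForm p β hu₂ husub, hβ']
  exact mem_sector.mp <|
    stmt_8_general volume hp2 hθ₀ (mul_sub_two_div_four_lt_one hα hp4) hu₂ husupp h0u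
end

section
/- Let N ≥ 2, let Ω ⊆ ℝ^N be open with 0 ∉ closure(Ω), let p ≥ 2 and β ∈ ℝ. Then for every smooth compactly supported function u : Ω → ℂ, Re ∫_Ω (−Δu) conj(u) |u|^{p−2} |x|^{−β} dx = (p−1) ∫_Ω | Re( conj(u) ∇u ) |² |u|^{p−4} |x|^{−β} dx + ∫_Ω | Im( conj(u) ∇u ) |² |u|^{p−4} |x|^{−β} dx + (β(N−2−β)/p) ∫_Ω |u|^p |x|^{−β−2} dx, where the integrands | Re( conj(u) ∇u ) |² |u|^{p−4} and | Im( conj(u) ∇u ) |² |u|^{p−4} are interpreted as 0 at points where u vanishes. -/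
open MeasureTheory

/-!
The identity is Green's second formula `∫ (Δφ) w = ∫ φ Δw` for `φ = |u| ^ p` and `w = |x| ^ (-β)`.
Indeed `Δ|x| ^ s = s (s + N - 2) |x| ^ (s - 2)`, while
`∂²(|u| ^ p) = p (|u| ^ (p - 2) (⟪u, ∂²u⟫ + |∂u|²) + (p - 2) |u| ^ (p - 4) ⟪u, ∂u⟫²)`
and `|u|² |∂u|² = (Re (conj u ∂u))² + (Im (conj u ∂u))²`.
For `p = 2` the last equality may only be divided by `|u|²` off the zeros of `u`; this is enough
because `∂u = 0` almost everywhere on `{u = 0}`.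
-/

open Filter Topology Asymptotics
open scoped ComplexConjugate RealInnerProductSpace

theorem rpow_sub_two_eq_sq_mul {x : ℝ} (hx : x ≠ 0) (p : ℝ) :
    x ^ (p - 2) = x ^ 2 * x ^ (p - 4) := by
  rw [show p - 2 = p - 4 + (2 : ℕ) by push_cast; ring, Real.rpow_add_natCast hx, mul_comm]

section Integrable

variable {X F : Type*} [TopologicalSpace X] [T2Space X] [MeasurableSpace X]
  [OpensMeasurableSpace X] [NormedAddCommGroup F] {μ : Measure X} [IsFiniteMeasureOnCompacts μ]

theorem integrable_of_continuousOn_of_eq_zero [SecondCountableTopologyEither X F] {f : X → F}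
    {K : Set X} (hK : IsCompact K) (hf : ContinuousOn f K) (hf0 : ∀ x ∉ K, f x = 0) :
    Integrable f μ :=
  (integrableOn_iff_integrable_of_support_subset (Function.support_subset_iff'.mpr hf0)).mp
    (hf.integrableOn_compact hK)

theorem integrable_mul_norm_rpow_sub_four_mul [TopologicalSpace.PseudoMetrizableSpace X]
    {u : X → F} {f g w : X → ℝ} {p : ℝ}
    (hu : Continuous u) (hsupp : HasCompactSupport u) (hf : Continuous f) (hg : Continuous g)
    (hfg : ∀ x, |f x| ≤ ‖u x‖ ^ 2 * g x) (hw : ContinuousOn w (tsupport u)) (hp : 2 ≤ p) :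
    Integrable (fun x => f x * ‖u x‖ ^ (p - 4) * w x) μ := by
  have hf0 (x) (hx : u x = 0) : f x = 0 := by simpa [hx] using hfg x
  have hzero (x) (hx : x ∉ tsupport u) : f x * ‖u x‖ ^ (p - 4) * w x = 0 := by
    simp [hf0 x (image_eq_zero_of_notMem_tsupport hx)]
  rw [← integrableOn_iff_integrable_of_support_subset (Function.support_subset_iff'.mpr hzero)]
  have hbound : IntegrableOn (fun x => g x * ‖u x‖ ^ (p - 2) * w x) (tsupport u) μ :=
    ((hg.mul (hu.norm.rpow_const fun _ => Or.inr (sub_nonneg.mpr hp))).continuousOn.mul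
      hw).integrableOn_compact hsupp
  have hmeas : AEStronglyMeasurable (fun x => f x * ‖u x‖ ^ (p - 4)) (μ.restrict (tsupport u)) :=
    (hf.measurable.mul (hu.norm.measurable.pow_const (p - 4))).aestronglyMeasurable
  refine Integrable.mono hbound
    (hmeas.mul (hw.aestronglyMeasurable (isClosed_tsupport u).measurableSet))
    (.of_forall fun x => ?_)
  rcases eq_or_ne (u x) 0 with hx | hx
  · simp only [hf0 x hx, zero_mul, norm_zero, norm_nonneg]
  · simp only [norm_mul, Real.norm_eq_abs]
    gcongr ?_ * _
    calc |f x| * |‖u x‖ ^ (p - 4)| ≤ ‖u x‖ ^ 2 * |g x| * |‖u x‖ ^ (p - 4)| := by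
          gcongr
          exact (hfg x).trans (by gcongr; exact le_abs_self _)
      _ = |g x| * |‖u x‖ ^ (p - 2)| := by
          rw [rpow_sub_two_eq_sq_mul (norm_ne_zero_iff.mpr hx), abs_mul,
            abs_of_nonneg (sq_nonneg ‖u x‖)]
          ring

end Integrable

section DirDeriv

variable {E F : Type*} [NormedAddCommGroup E] [NormedSpace ℝ E] [NormedAddCommGroup F]
  [NormedSpace ℝ F]

/-- The derivative of `f` in the direction `v`, as a function of the base point so that it can be
iterated; like `fderiv`, it is `0` where `f` is not differentiable. -/
noncomputable def dirDeriv (v : E) (f : E → F) (x : E) : F := fderiv ℝ f x v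

/-- The Laplacian of `f` along a finite family of directions, `∑ i, ∂_{b i}² f`. For an orthonormal
basis `b` and a `C²` function `f` it is the usual Laplacian. -/
noncomputable def laplacianAlong {ι : Type*} [Fintype ι] (b : ι → E) (f : E → F) (x : E) : F :=
  ∑ i, dirDeriv (b i) (dirDeriv (b i) f) x

theorem contDiffAt_dirDeriv {m n : WithTop ℕ∞} {f : E → F} {x : E} (hf : ContDiffAt ℝ n f x)
    (hmn : m + 1 ≤ n) (v : E) : ContDiffAt ℝ m (dirDeriv v f) x :=
  (hf.fderiv_right hmn).clm_apply contDiffAt_const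

theorem contDiff_dirDeriv {m n : WithTop ℕ∞} {f : E → F} (hf : ContDiff ℝ n f) (hmn : m + 1 ≤ n)
    (v : E) : ContDiff ℝ m (dirDeriv v f) :=
  (hf.fderiv_right hmn).clm_apply contDiff_const

theorem countable_setOf_eq_and_deriv_ne_zero (f : ℝ → F) (c : F) :
    {t | f t = c ∧ deriv f t ≠ 0}.Countable := by
  refine (countable_setOfPred_isolated_right_within (s := {t | f t = c})).mono ?_
  rintro t ⟨hft, hdf⟩
  refine ⟨hft, ?_⟩
  have hne : ∀ᶠ s in 𝓝[≠] t, f s ≠ c :=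
    (differentiableAt_of_deriv_ne_zero hdf).hasDerivAt.eventually_ne hdf
  rw [Set.inter_comm, nhdsWithin_inter', inf_principal_eq_bot]
  exact nhdsWithin_mono t (fun s (hs : t < s) => hs.ne') hne

variable [FiniteDimensional ℝ E] [MeasurableSpace E] [BorelSpace E] {μ : Measure E}
  [μ.IsAddHaarMeasure]

-- On a line in direction `v`, the zeros of `f` with nonzero derivative are isolated.
theorem ae_dirDeriv_eq_zero_of_eq_zero {f : E → F} (hf : ContDiff ℝ 1 f) (v : E) :
    ∀ᵐ x ∂μ, f x = 0 → dirDeriv v f x = 0 := by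
  have hmeas : MeasurableSet {x | f x = 0 → dirDeriv v f x = 0} :=
    (isClosed_eq hf.continuous continuous_const).measurableSet.imp
      (isClosed_eq (contDiff_dirDeriv (m := 0) hf (by simp) v).continuous
        continuous_const).measurableSet
  refine ae_mem_of_ae_add_linearMap_mem (LinearMap.toSpanSingleton ℝ E v) volume μ hmeas fun x => ?_
  have hline (t : ℝ) : HasDerivAt (fun s : ℝ => f (x + s • v)) (dirDeriv v f (x + t • v)) t := by
    have := (hf.differentiable one_ne_zero (x + t • v)).hasFDerivAt.comp_hasDerivAt t
      (((hasDerivAt_id t).smul_const v).const_add x)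
    simpa [dirDeriv, Function.comp_def] using this
  filter_upwards [(countable_setOf_eq_and_deriv_ne_zero (fun s : ℝ => f (x + s • v)) 0).ae_notMem
    volume] with t ht hft
  by_contra hdf
  exact ht ⟨hft, by rwa [(hline t).deriv]⟩

theorem integral_dirDeriv_dirDeriv_mul {φ w : E → ℝ} {v : E} (hφ : ContDiff ℝ 1 φ)
    (hsupp : HasCompactSupport φ) (hφ' : Differentiable ℝ (dirDeriv v φ))
    (hw : ∀ x ∈ tsupport φ, ContDiffAt ℝ 2 w x)
    (hint : Integrable (fun x => dirDeriv v (dirDeriv v φ) x * w x) μ) :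
    ∫ x, dirDeriv v (dirDeriv v φ) x * w x ∂μ = ∫ x, φ x * dirDeriv v (dirDeriv v w) x ∂μ := by
  have hφ'supp : tsupport (dirDeriv v φ) ⊆ tsupport φ := tsupport_fderiv_apply_subset ℝ v
  have hw' (x) (hx : x ∈ tsupport φ) : ContDiffAt ℝ 1 (dirDeriv v w) x :=
    contDiffAt_dirDeriv (hw x hx) (by norm_num) v
  have hw'' (x) (hx : x ∈ tsupport φ) : ContDiffAt ℝ 0 (dirDeriv v (dirDeriv v w)) x :=
    contDiffAt_dirDeriv (hw' x hx) (by norm_num) v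
  have hφcont : ContinuousOn φ (tsupport φ) := hφ.continuous.continuousOn
  have hφ'cont : ContinuousOn (dirDeriv v φ) (tsupport φ) := hφ'.continuous.continuousOn
  have integrable_mul {f g : E → ℝ} (hf : ContinuousOn f (tsupport φ))
      (hg : ∀ x ∈ tsupport φ, ContinuousAt g x) (hf0 : tsupport f ⊆ tsupport φ) :
      Integrable (fun x => f x * g x) μ :=
    integrable_of_continuousOn_of_eq_zero hsupp (hf.mul fun x hx => (hg x hx).continuousWithinAt)
      fun x hx => by simp [image_eq_zero_of_notMem_tsupport (mt (@hf0 x) hx)]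
  have hφ'w' := integrable_mul hφ'cont (fun x hx => (hw' x hx).continuousAt) hφ'supp
  have hfirst := integral_mul_fderiv_eq_neg_fderiv_mul_of_integrable hint hφ'w'
    (integrable_mul hφ'cont (fun x hx => (hw x hx).continuousAt) hφ'supp)
    (fun x _ => hφ' x) (fun x hx => (hw x (hφ'supp hx)).differentiableAt two_ne_zero)
  have hsecond := integral_mul_fderiv_eq_neg_fderiv_mul_of_integrable hφ'w'
    (integrable_mul hφcont (fun x hx => (hw'' x hx).continuousAt) subset_rfl)
    (integrable_mul hφcont (fun x hx => (hw' x hx).continuousAt) subset_rfl)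
    (fun x _ => hφ.differentiable one_ne_zero x)
    (fun x hx => (hw' x hx).differentiableAt one_ne_zero)
  exact (neg_eq_iff_eq_neg.mpr hfirst).symm.trans hsecond.symm

end DirDeriv

section NormRpow

variable {E F : Type*} [NormedAddCommGroup E] [NormedSpace ℝ E] [NormedAddCommGroup F]
  [InnerProductSpace ℝ F] {f g : E → F} {f' g' : E →L[ℝ] F} {x : E} {p : ℝ}

theorem hasFDerivAt_norm_rpow_comp (hf : HasFDerivAt f f' x) (h : f x ≠ 0 ∨ 1 < p) :
    HasFDerivAt (fun y => ‖f y‖ ^ p) ((p * ‖f x‖ ^ (p - 2)) • (innerSL ℝ (f x)).comp f') x := by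
  rcases eq_or_ne (f x) 0 with hx | hx
  · exact ((hasFDerivAt_norm_rpow (f x) (h.resolve_left (not_not.mpr hx))).comp x hf).congr_fderiv
      (ContinuousLinearMap.smul_comp _ _ _)
  · have norm_sq_rpow (r : ℝ) (z : F) : (‖z‖ ^ 2) ^ r = ‖z‖ ^ (2 * r) := by
      rw [← Real.rpow_natCast_mul (norm_nonneg z), Nat.cast_ofNat]
    refine (hf.norm_sq.rpow_const (p := p / 2) (Or.inl (by positivity))).congr_of_eventuallyEq
      (Eventually.of_forall fun y => ?_) |>.congr_fderiv ?_
    · simp only [norm_sq_rpow]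
      ring_nf
    · ext y
      simp only [norm_sq_rpow, smul_apply, smul_eq_mul, nsmul_eq_mul]
      ring_nf

theorem hasFDerivAt_mul_of_eq_zero {a b : E → ℝ} {b' : E →L[ℝ] ℝ} (ha : ContinuousAt a x)
    (hb : HasFDerivAt b b' x) (ha0 : a x = 0) (hb0 : b x = 0) :
    HasFDerivAt (fun y => a y * b y) (0 : E →L[ℝ] ℝ) x := by
  have ha1 : a =o[𝓝 x] fun _ => (1 : ℝ) := by
    simpa [ContinuousAt, ha0, isLittleO_one_iff] using ha
  have hb1 : b =O[𝓝 x] fun y => y - x := by simpa [hb0] using hb.isBigO_sub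
  refine HasFDerivAt.of_isLittleO ?_
  simpa [hb0] using ha1.mul_isBigO hb1.norm_right

theorem hasFDerivAt_norm_rpow_mul_inner {q : ℝ} (hf : HasFDerivAt f f' x)
    (hg : HasFDerivAt g g' x) (h : f x ≠ 0 ∨ 0 ≤ q) :
    HasFDerivAt (fun y => ‖f y‖ ^ q * ⟪f y, g y⟫)
      (‖f x‖ ^ q • ((innerSL ℝ (f x)).comp g' + (innerSL ℝ (g x)).comp f')
        + (q * ‖f x‖ ^ (q - 2) * ⟪f x, g x⟫) • (innerSL ℝ (f x)).comp f') x := by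
  have hinner : HasFDerivAt (fun y => ⟪f y, g y⟫)
      ((innerSL ℝ (f x)).comp g' + (innerSL ℝ (g x)).comp f') x :=
    (hf.inner ℝ hg).congr_fderiv (by ext; simp [real_inner_comm])
  rcases eq_or_ne (f x) 0 with hx | hx
  · rcases (h.resolve_left (not_not.mpr hx)).eq_or_lt with rfl | hq
    · simpa using hinner
    · have hnorm : ContinuousAt (fun y => ‖f y‖ ^ q) x :=
        hf.continuousAt.norm.rpow_const (Or.inr hq.le)
      simpa [hx, hq.ne'] using
        hasFDerivAt_mul_of_eq_zero hnorm hinner (by simp [hx, hq.ne']) (by simp [hx])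
  · refine (((hasFDerivAt_norm_rpow_comp (p := q) hf (Or.inl hx)).mul hinner)).congr_fderiv ?_
    ext y
    simp only [smul_add, add_apply, smul_apply, ContinuousLinearMap.comp_apply, coe_innerSL_apply,
      smul_eq_mul]
    ring

theorem dirDeriv_norm_rpow (hf : DifferentiableAt ℝ f x) (h : f x ≠ 0 ∨ 1 < p) (v : E) :
    dirDeriv v (fun y => ‖f y‖ ^ p) x = p * (‖f x‖ ^ (p - 2) * ⟪f x, dirDeriv v f x⟫) := by
  simp [dirDeriv, (hasFDerivAt_norm_rpow_comp hf.hasFDerivAt h).fderiv, mul_assoc]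

theorem hasFDerivAt_dirDeriv_norm_rpow (hf : ContDiffAt ℝ 2 f x) (h : f x ≠ 0 ∨ 2 ≤ p) (v : E) :
    HasFDerivAt (dirDeriv v fun y => ‖f y‖ ^ p)
      (p • (‖f x‖ ^ (p - 2) • ((innerSL ℝ (f x)).comp (fderiv ℝ (dirDeriv v f) x)
          + (innerSL ℝ (dirDeriv v f x)).comp (fderiv ℝ f x))
        + ((p - 2) * ‖f x‖ ^ (p - 4) * ⟪f x, dirDeriv v f x⟫) •
          (innerSL ℝ (f x)).comp (fderiv ℝ f x))) x := by
  have hnhds : ∀ᶠ y in 𝓝 x, f y ≠ 0 ∨ 1 < p := h.elim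
    (fun hx => (hf.continuousAt.eventually_ne hx).mono fun _ => Or.inl)
    (fun hp => Eventually.of_forall fun _ => Or.inr (by linarith))
  have hformula : dirDeriv v (fun y => ‖f y‖ ^ p)
      =ᶠ[𝓝 x] fun y => p * (‖f y‖ ^ (p - 2) * ⟪f y, dirDeriv v f y⟫) := by
    filter_upwards [hf.eventually (by simp), hnhds] with y hy hne
    exact dirDeriv_norm_rpow (hy.differentiableAt two_ne_zero) hne v
  have hdf : DifferentiableAt ℝ (dirDeriv v f) x :=
    (contDiffAt_dirDeriv (m := 1) hf (by norm_num) v).differentiableAt one_ne_zero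
  have hderiv := (hasFDerivAt_norm_rpow_mul_inner (q := p - 2)
    (hf.differentiableAt two_ne_zero).hasFDerivAt hdf.hasFDerivAt
    (h.imp_right sub_nonneg.mpr)).const_mul p
  rw [show p - 2 - 2 = p - 4 by ring] at hderiv
  exact hderiv.congr_of_eventuallyEq hformula

theorem dirDeriv_dirDeriv_norm_rpow (hf : ContDiffAt ℝ 2 f x) (h : f x ≠ 0 ∨ 2 ≤ p) (v : E) :
    dirDeriv v (dirDeriv v fun y => ‖f y‖ ^ p) x
      = p * (‖f x‖ ^ (p - 2) * (⟪f x, dirDeriv v (dirDeriv v f) x⟫ + ‖dirDeriv v f x‖ ^ 2)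
        + (p - 2) * ‖f x‖ ^ (p - 4) * ⟪f x, dirDeriv v f x⟫ ^ 2) := by
  rw [dirDeriv, (hasFDerivAt_dirDeriv_norm_rpow hf h v).fderiv]
  simp only [dirDeriv, smul_apply, add_apply,
    ContinuousLinearMap.comp_apply, innerSL_apply_apply, smul_eq_mul, real_inner_self_eq_norm_sq]
  ring

end NormRpow

section NormRpowGreen

variable {E F : Type*} [NormedAddCommGroup E] [NormedSpace ℝ E] [MeasurableSpace E] [BorelSpace E]
  {μ : Measure E} [NormedAddCommGroup F] [InnerProductSpace ℝ F] {u : E → F} {w : E → ℝ} {p : ℝ}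

theorem integrable_dirDeriv_dirDeriv_norm_rpow_mul [IsFiniteMeasureOnCompacts μ]
    (hu : ContDiff ℝ 2 u) (hsupp : HasCompactSupport u) (hw : ContinuousOn w (tsupport u))
    (hp : 2 ≤ p) (v : E) :
    Integrable (fun x => dirDeriv v (dirDeriv v fun y => ‖u y‖ ^ p) x * w x) μ := by
  have hdu : ContDiff ℝ 1 (dirDeriv v u) := contDiff_dirDeriv hu (by norm_num) v
  have hddu : Continuous (dirDeriv v (dirDeriv v u)) :=
    (contDiff_dirDeriv (m := 0) hdu (by norm_num) v).continuous
  have hzero (x) (hx : x ∉ tsupport u) : u x = 0 ∧ dirDeriv v u x = 0 :=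
    ⟨image_eq_zero_of_notMem_tsupport hx,
      image_eq_zero_of_notMem_tsupport fun hx' => hx (tsupport_fderiv_apply_subset ℝ v hx')⟩
  have hfirst : Integrable (fun x => ‖u x‖ ^ (p - 2) *
      (⟪u x, dirDeriv v (dirDeriv v u) x⟫ + ‖dirDeriv v u x‖ ^ 2) * w x) μ := by
    refine integrable_of_continuousOn_of_eq_zero hsupp (.mul (Continuous.continuousOn ?_) hw)
      fun x hx => by simp [hzero x hx]
    exact (hu.continuous.norm.rpow_const fun _ => Or.inr (sub_nonneg.mpr hp)).mul
      ((hu.continuous.inner hddu).add (hdu.continuous.norm.pow 2))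
  have hsecond : Integrable (fun x => ⟪u x, dirDeriv v u x⟫ ^ 2 * ‖u x‖ ^ (p - 4) * w x) μ := by
    refine integrable_mul_norm_rpow_sub_four_mul hu.continuous hsupp
      ((hu.continuous.inner hdu.continuous).pow 2) (hdu.continuous.norm.pow 2) (fun x => ?_) hw hp
    rw [abs_pow, Pi.pow_apply, ← mul_pow]
    gcongr
    exact abs_real_inner_le_norm _ _
  refine ((hfirst.add (hsecond.const_mul (p - 2))).const_mul p).congr (.of_forall fun x => ?_)
  simp only [Pi.add_apply, dirDeriv_dirDeriv_norm_rpow hu.contDiffAt (Or.inr hp)]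
  ring

variable [FiniteDimensional ℝ E] [μ.IsAddHaarMeasure]

theorem integral_dirDeriv_dirDeriv_norm_rpow_mul (hu : ContDiff ℝ 2 u)
    (hsupp : HasCompactSupport u) (hw : ∀ x ∈ tsupport u, ContDiffAt ℝ 2 w x) (hp : 2 ≤ p) (v : E) :
    ∫ x, dirDeriv v (dirDeriv v fun y => ‖u y‖ ^ p) x * w x ∂μ
      = ∫ x, ‖u x‖ ^ p * dirDeriv v (dirDeriv v w) x ∂μ := by
  have hp0 : p ≠ 0 := by positivity
  have hsub : tsupport (fun x => ‖u x‖ ^ p) ⊆ tsupport u :=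
    tsupport_comp_subset (g := fun z : F => ‖z‖ ^ p) (by simp [hp0]) u
  exact integral_dirDeriv_dirDeriv_mul ((hu.of_le one_le_two).norm_rpow (by linarith))
    (hsupp.of_isClosed_subset (isClosed_tsupport _) hsub)
    (fun x => (hasFDerivAt_dirDeriv_norm_rpow hu.contDiffAt (Or.inr hp) v).differentiableAt)
    (fun x hx => hw x (hsub hx))
    (integrable_dirDeriv_dirDeriv_norm_rpow_mul hu hsupp
      (fun x hx => (hw x hx).continuousAt.continuousWithinAt) hp v)

theorem integral_laplacianAlong_norm_rpow_mul {ι : Type*} [Fintype ι] (hu : ContDiff ℝ 2 u)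
    (hsupp : HasCompactSupport u) (hw : ∀ x ∈ tsupport u, ContDiffAt ℝ 2 w x) (hp : 2 ≤ p)
    (b : ι → E) :
    ∫ x, laplacianAlong b (fun y => ‖u y‖ ^ p) x * w x ∂μ
      = ∫ x, ‖u x‖ ^ p * laplacianAlong b w x ∂μ := by
  have hp0 : p ≠ 0 := by positivity
  have hint (i) : Integrable (fun x => ‖u x‖ ^ p * dirDeriv (b i) (dirDeriv (b i) w) x) μ := by
    refine integrable_of_continuousOn_of_eq_zero hsupp (.mul (Continuous.continuousOn ?_)
      fun x hx => ContinuousAt.continuousWithinAt ?_)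
      fun x hx => by simp [image_eq_zero_of_notMem_tsupport hx, hp0]
    · exact hu.continuous.norm.rpow_const fun _ => Or.inr (by positivity)
    · exact (contDiffAt_dirDeriv (m := 0) (contDiffAt_dirDeriv (m := 1) (hw x hx) (by norm_num) _)
        (by norm_num) _).continuousAt
  simp only [laplacianAlong, Finset.sum_mul, Finset.mul_sum]
  rw [integral_finsetSum _ fun i _ => hint i, integral_finsetSum _ fun i _ =>
    integrable_dirDeriv_dirDeriv_norm_rpow_mul hu hsupp
      (fun x hx => (hw x hx).continuousAt.continuousWithinAt) hp (b i)]
  exact Finset.sum_congr rfl fun i _ =>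
    integral_dirDeriv_dirDeriv_norm_rpow_mul hu hsupp hw hp (b i)

end NormRpowGreen

section Complex

variable {E : Type*} [NormedAddCommGroup E] [NormedSpace ℝ E] {u : E → ℂ} {p : ℝ}

theorem dirDeriv_dirDeriv_norm_rpow_eq_re_im {x v : E} (hu : ContDiffAt ℝ 2 u x) (hp : 2 ≤ p)
    (hx : u x = 0 → dirDeriv v u x = 0) :
    dirDeriv v (dirDeriv v fun y => ‖u y‖ ^ p) x
      = p * ((dirDeriv v (dirDeriv v u) x * conj (u x)).re * ‖u x‖ ^ (p - 2)
        + (p - 1) * ((conj (u x) * dirDeriv v u x).re ^ 2 * ‖u x‖ ^ (p - 4))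
        + (conj (u x) * dirDeriv v u x).im ^ 2 * ‖u x‖ ^ (p - 4)) := by
  rw [dirDeriv_dirDeriv_norm_rpow hu (Or.inr hp), Complex.inner, Complex.inner,
    mul_comm (dirDeriv v u x)]
  rcases eq_or_ne (u x) 0 with h0 | h0
  · simp [h0, hx h0]
  · have hnorm : ‖u x‖ ^ 2 * ‖dirDeriv v u x‖ ^ 2
        = (conj (u x) * dirDeriv v u x).re ^ 2 + (conj (u x) * dirDeriv v u x).im ^ 2 := by
      rw [← mul_pow, ← Complex.norm_conj (u x), ← norm_mul, Complex.sq_norm, Complex.normSq_apply]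
      ring
    linear_combination p * ‖dirDeriv v u x‖ ^ 2 * rpow_sub_two_eq_sq_mul (norm_ne_zero_iff.mpr h0) p
      + p * ‖u x‖ ^ (p - 4) * hnorm

variable [MeasurableSpace E] [BorelSpace E] {μ : Measure E} {ι : Type*} [Fintype ι] {w : E → ℝ}

theorem integrable_laplacianAlong_mul_conj_mul [IsFiniteMeasureOnCompacts μ]
    (hu : ContDiff ℝ 2 u) (hsupp : HasCompactSupport u) (hw : ContinuousOn w (tsupport u))
    (hp : 2 ≤ p) (b : ι → E) : Integrable (fun x => laplacianAlong b u x * conj (u x)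
      * ((‖u x‖ ^ (p - 2) * w x : ℝ) : ℂ)) μ := by
  refine integrable_of_continuousOn_of_eq_zero hsupp (.mul (Continuous.continuousOn ?_) ?_)
    fun x hx => by simp [image_eq_zero_of_notMem_tsupport hx]
  · exact (continuous_finsetSum _ fun i _ => (contDiff_dirDeriv (m := 0)
      (contDiff_dirDeriv (m := 1) hu (by norm_num) _) (by norm_num) (b i)).continuous).mul
        (Complex.continuous_conj.comp hu.continuous)
  · exact Complex.continuous_ofReal.comp_continuousOn ((hu.continuous.norm.rpow_const
      fun _ => Or.inr (sub_nonneg.mpr hp)).continuousOn.mul hw)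

theorem integrable_sum_sq_conj_mul_dirDeriv_mul [IsFiniteMeasureOnCompacts μ] {r : ℂ → ℝ}
    (hr : Continuous r) (hrle : ∀ z, |r z| ≤ ‖z‖) (hu : ContDiff ℝ 1 u)
    (hsupp : HasCompactSupport u) (hw : ContinuousOn w (tsupport u)) (hp : 2 ≤ p) (b : ι → E) :
    Integrable (fun x => (∑ i, r (conj (u x) * dirDeriv (b i) u x) ^ 2)
      * ‖u x‖ ^ (p - 4) * w x) μ := by
  have hdu (i) : Continuous (dirDeriv (b i) u) :=
    (contDiff_dirDeriv (m := 0) hu (by norm_num) (b i)).continuous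
  have hsum : Continuous fun x => ∑ i, r (conj (u x) * dirDeriv (b i) u x) ^ 2 :=
    continuous_finsetSum _ fun i _ =>
      (hr.comp ((Complex.continuous_conj.comp hu.continuous).mul (hdu i))).pow 2
  refine integrable_mul_norm_rpow_sub_four_mul hu.continuous hsupp hsum
    (g := fun x => ∑ i, ‖dirDeriv (b i) u x‖ ^ 2)
    (continuous_finsetSum _ fun i _ => (hdu i).norm.pow 2) (fun x => ?_) hw hp
  rw [abs_of_nonneg (Finset.sum_nonneg fun i _ => sq_nonneg _), Finset.mul_sum]
  gcongr with i
  calc r (conj (u x) * dirDeriv (b i) u x) ^ 2 ≤ ‖conj (u x) * dirDeriv (b i) u x‖ ^ 2 :=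
        sq_le_sq.mpr ((hrle _).trans (le_abs_self _))
    _ = ‖u x‖ ^ 2 * ‖dirDeriv (b i) u x‖ ^ 2 := by rw [norm_mul, Complex.norm_conj, mul_pow]

variable [FiniteDimensional ℝ E] [μ.IsAddHaarMeasure]

theorem ae_laplacianAlong_norm_rpow_eq (hu : ContDiff ℝ 2 u) (hp : 2 ≤ p) (b : ι → E) :
    ∀ᵐ x ∂μ, laplacianAlong b (fun y => ‖u y‖ ^ p) x
      = p * ((laplacianAlong b u x * conj (u x)).re * ‖u x‖ ^ (p - 2)
        + (p - 1) * ((∑ i, (conj (u x) * dirDeriv (b i) u x).re ^ 2) * ‖u x‖ ^ (p - 4))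
        + (∑ i, (conj (u x) * dirDeriv (b i) u x).im ^ 2) * ‖u x‖ ^ (p - 4)) := by
  filter_upwards [ae_all_iff.mpr fun i =>
    ae_dirDeriv_eq_zero_of_eq_zero (μ := μ) (hu.of_le one_le_two) (b i)] with x hx
  simp only [laplacianAlong, dirDeriv_dirDeriv_norm_rpow_eq_re_im hu.contDiffAt hp (hx _),
    Finset.sum_mul, Complex.re_sum, Finset.mul_sum, Finset.sum_add_distrib, mul_add]

theorem re_integral_neg_laplacianAlong_mul (hu : ContDiff ℝ 2 u)
    (hsupp : HasCompactSupport u) (hw : ∀ x ∈ tsupport u, ContDiffAt ℝ 2 w x) (hp : 2 ≤ p)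
    (b : ι → E) :
    (∫ x, -laplacianAlong b u x * conj (u x)
        * ((‖u x‖ ^ (p - 2) * w x : ℝ) : ℂ) ∂μ).re
      = (p - 1) * (∫ x, (∑ i, (conj (u x) * dirDeriv (b i) u x).re ^ 2)
            * ‖u x‖ ^ (p - 4) * w x ∂μ)
        + (∫ x, (∑ i, (conj (u x) * dirDeriv (b i) u x).im ^ 2) * ‖u x‖ ^ (p - 4) * w x ∂μ)
        - p⁻¹ * ∫ x, ‖u x‖ ^ p * laplacianAlong b w x ∂μ := by
  have hwcont : ContinuousOn w (tsupport u) :=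
    fun x hx => (hw x hx).continuousAt.continuousWithinAt
  have hlap := integrable_laplacianAlong_mul_conj_mul (μ := μ) hu hsupp hwcont hp b
  have hre := integrable_sum_sq_conj_mul_dirDeriv_mul (μ := μ) Complex.continuous_re
    Complex.abs_re_le_norm (hu.of_le one_le_two) hsupp hwcont hp b
  have him := integrable_sum_sq_conj_mul_dirDeriv_mul (μ := μ) Complex.continuous_im
    Complex.abs_im_le_norm (hu.of_le one_le_two) hsupp hwcont hp b
  have hexpand : ∫ x, ‖u x‖ ^ p * laplacianAlong b w x ∂μ
      = ∫ x, p * ((laplacianAlong b u x * conj (u x)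
            * ((‖u x‖ ^ (p - 2) * w x : ℝ) : ℂ)).re
          + (p - 1) * ((∑ i, (conj (u x) * dirDeriv (b i) u x).re ^ 2) * ‖u x‖ ^ (p - 4) * w x)
          + (∑ i, (conj (u x) * dirDeriv (b i) u x).im ^ 2) * ‖u x‖ ^ (p - 4) * w x) ∂μ := by
    rw [← integral_laplacianAlong_norm_rpow_mul hu hsupp hw hp b]
    refine integral_congr_ae ?_
    filter_upwards [ae_laplacianAlong_norm_rpow_eq (μ := μ) hu hp b] with x hx
    rw [hx, Complex.re_mul_ofReal]
    ring
  have hre_lap := Complex.reCLM.integral_comp_comm hlap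
  simp only [Complex.reCLM_apply] at hre_lap
  rw [integral_const_mul, integral_add ?_ him, integral_add ?_ (hre.const_mul (p - 1)),
    hre_lap, integral_const_mul] at hexpand
  · have hp0 : p ≠ 0 := by positivity
    simp only [hexpand, inv_mul_cancel_left₀ hp0, neg_mul, integral_neg, Complex.neg_re]
    ring
  · exact hlap.re
  · exact hlap.re.add (hre.const_mul (p - 1))

end Complex

section Radial

variable {E ι : Type*} [NormedAddCommGroup E] [InnerProductSpace ℝ E] [Fintype ι]

theorem contDiffAt_norm_rpow {x : E} (hx : x ≠ 0) (s : ℝ) {n : WithTop ℕ∞} :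
    ContDiffAt ℝ n (fun y : E => ‖y‖ ^ s) x :=
  (contDiffAt_norm ℝ hx).rpow_const_of_ne (norm_ne_zero_iff.mpr hx)

theorem laplacianAlong_norm_rpow (b : OrthonormalBasis ι ℝ E) {x : E} (hx : x ≠ 0) (s : ℝ) :
    laplacianAlong b (fun y : E => ‖y‖ ^ s) x
      = s * (s + Fintype.card ι - 2) * ‖x‖ ^ (s - 2) := by
  have hid (v : E) : dirDeriv v (fun y : E => y) = fun _ => v := by
    ext; simp [dirDeriv]
  have hconst (v : E) : dirDeriv v (fun _ : E => v) x = 0 := by simp [dirDeriv]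
  calc laplacianAlong b (fun y : E => ‖y‖ ^ s) x
      = ∑ i, s * (‖x‖ ^ (s - 2) + (s - 2) * ‖x‖ ^ (s - 4) * ⟪x, b i⟫ ^ 2) := by
        simp [laplacianAlong, dirDeriv_dirDeriv_norm_rpow contDiffAt_fun_id (Or.inl hx), hid,
          hconst]
    _ = s * (Fintype.card ι * ‖x‖ ^ (s - 2) + (s - 2) * (‖x‖ ^ 2 * ‖x‖ ^ (s - 4))) := by
        rw [← Finset.mul_sum, Finset.sum_add_distrib, ← Finset.mul_sum, b.sum_sq_inner_left,
          Finset.sum_const, Finset.card_univ, nsmul_eq_mul]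
        ring
    _ = s * (s + Fintype.card ι - 2) * ‖x‖ ^ (s - 2) := by
        rw [rpow_sub_two_eq_sq_mul (norm_ne_zero_iff.mpr hx)]
        ring

end Radial

theorem stmt_9_general {E ι : Type*} [NormedAddCommGroup E] [InnerProductSpace ℝ E]
    [MeasurableSpace E] [BorelSpace E] (μ : Measure E) [μ.IsAddHaarMeasure] [Fintype ι]
    (b : OrthonormalBasis ι ℝ E) {Ω : Set E} {u : E → ℂ} (hu : ContDiff ℝ 2 u)
    (hsupp : HasCompactSupport u) (hsub : Function.support u ⊆ Ω) (h0 : (0 : E) ∉ tsupport u)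
    {p : ℝ} (hp : 2 ≤ p) (β : ℝ) :
    (∫ x in Ω, -laplacianAlong b u x * conj (u x)
        * ((‖u x‖ ^ (p - 2) * ‖x‖ ^ (-β) : ℝ) : ℂ) ∂μ).re
      = (p - 1) * (∫ x in Ω, (∑ i, (conj (u x) * dirDeriv (b i) u x).re ^ 2)
            * ‖u x‖ ^ (p - 4) * ‖x‖ ^ (-β) ∂μ)
        + (∫ x in Ω, (∑ i, (conj (u x) * dirDeriv (b i) u x).im ^ 2)
            * ‖u x‖ ^ (p - 4) * ‖x‖ ^ (-β) ∂μ)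
        + β * (Fintype.card ι - 2 - β) / p * ∫ x in Ω, ‖u x‖ ^ p * ‖x‖ ^ (-β - 2) ∂μ := by
  have hp0 : p ≠ 0 := by positivity
  have : FiniteDimensional ℝ E := b.toBasis.finiteDimensional_of_finite
  have hu0 (x) (hx : x ∉ Ω) : u x = 0 := Function.notMem_support.mp (mt (@hsub x) hx)
  have hweight (x) : ‖u x‖ ^ p * laplacianAlong b (fun y => ‖y‖ ^ (-β)) x
      = -(β * (Fintype.card ι - 2 - β)) * (‖u x‖ ^ p * ‖x‖ ^ (-β - 2)) := by
    rcases eq_or_ne x 0 with rfl | hx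
    · simp [image_eq_zero_of_notMem_tsupport h0, hp0]
    · rw [laplacianAlong_norm_rpow b hx]
      ring
  repeat rw [setIntegral_eq_integral_of_forall_compl_eq_zero fun x hx => by simp [hu0 x hx, hp0]]
  rw [re_integral_neg_laplacianAlong_mul hu hsupp
    (fun x hx => contDiffAt_norm_rpow (ne_of_mem_of_not_mem hx h0) (-β)) hp b]
  simp only [hweight, integral_const_mul]
  ring

/-- the real-part identity
`Re ∫_Ω (−Δu) conj(u) |u|^{p−2} |x|^{−β} dx
 = (p−1)∫ |Re(conj(u)∇u)|² |u|^{p−4} |x|^{−β} + ∫ |Im(conj(u)∇u)|² |u|^{p−4} |x|^{−β}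
   + (β(N−2−β)/p) ∫ |u|^p |x|^{−β−2}`
for smooth compactly supported complex `u` on `Ω` (the integrands vanish where `u = 0`). -/
theorem stmt_9 (N : ℕ) (hN : 2 ≤ N) (Ω : Set (EuclideanSpace ℝ (Fin N))) (hΩ : IsOpen Ω)
    (h0 : (0 : EuclideanSpace ℝ (Fin N)) ∉ closure Ω)
    (p β : ℝ) (hp : 2 ≤ p)
    (u : EuclideanSpace ℝ (Fin N) → ℂ)
    (hu : ContDiff ℝ (⊤ : ℕ∞) u) (husupp : HasCompactSupport u) (husub : tsupport u ⊆ Ω) :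
    (∫ x in Ω,
        (-(∑ i : Fin N,
            fderiv ℝ (fun z => fderiv ℝ u z (EuclideanSpace.single i 1)) x
              (EuclideanSpace.single i 1)))
          * (starRingEnd ℂ) (u x)
          * ((‖u x‖ ^ (p - 2) * ‖x‖ ^ (-β) : ℝ) : ℂ)).re
      = (p - 1) * (∫ x in Ω,
            (∑ i : Fin N,
              (((starRingEnd ℂ) (u x) * fderiv ℝ u x (EuclideanSpace.single i 1)).re) ^ 2)
              * ‖u x‖ ^ (p - 4) * ‖x‖ ^ (-β))
        + (∫ x in Ω,
            (∑ i : Fin N,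
              (((starRingEnd ℂ) (u x) * fderiv ℝ u x (EuclideanSpace.single i 1)).im) ^ 2)
              * ‖u x‖ ^ (p - 4) * ‖x‖ ^ (-β))
        + β * ((N : ℝ) - 2 - β) / p * ∫ x in Ω, ‖u x‖ ^ p * ‖x‖ ^ (-β - 2) := by
  simpa only [EuclideanSpace.basisFun_apply, Fintype.card_fin, laplacianAlong] using!
    stmt_9_general volume (EuclideanSpace.basisFun (Fin N) ℝ) (contDiff_infty.mp hu 2) husupp
      ((subset_tsupport u).trans husub) (fun h => h0 (subset_closure (husub h))) hp β
end

section
/- Let N ≥ 3 and 2 ≤ p < 2 + 4/α. There exists a constant C > 0, depending only on N, p, α, a₁, a₂, such that for every smooth compactly supported function φ : Ω_Ψ → ℂ one has ( ∫_{Ω_Ψ} |φ(y)|^{pN/(N−2)} m̃(y) dy )^{(N−2)/(pN)} ≤ C ( Re ∫_{Ω_Ψ} ( −div( b(y) ∇φ(y) ) − ((N−2)²α(4+α)/16) |y|^{−2} φ(y) ) conj(φ(y)) |φ(y)|^{p−2} dy )^{1/p}. -/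
open MeasureTheory

/-!
With `u = |φ|^(p/2 - 1) φ`, the pointwise inequality
`Re (∂ᵥ(|φ|^(p-2) φ) · conj ∂ᵥφ) ≥ (1 - ((p-2)/p)²) |∂ᵥu|²` bounds the form of `-div(b ∇·)` from
below by `(1 - ((p-2)/p)²) (∫ |∇u|² + κ ∫ |∂ᵣu|²)`, where `b = 1 + κ y yᵀ / |y|²`.
The defect of the radial part is paid for by the full gradient, `|∂ᵣu| ≤ |∇u|`, leaving
`(1 - ((p-2)/p)² (1 + κ)) ∫ |∇u|² + κ ∫ |∂ᵣu|²`. By the radial Hardy inequality the last term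
absorbs the potential `c |y|⁻²`, as `c ≤ ((N-2)/2)² κ`. For `1 + κ = (1 + α/2)²` the remaining
coefficient is positive exactly when `p < 2 + 4/α`, and the Sobolev inequality for `u` concludes,
the weight being bounded.
-/

section RadialPower

open NormedSpace (normalize)

lemma tendsto_norm_rpow_zero {E : Type*} [NormedAddCommGroup E] {q : ℝ} (hq : 0 < q) :
    Filter.Tendsto (fun z : E ↦ ‖z‖ ^ q) (nhds 0) (nhds 0) := by
  simpa [hq.ne'] using
    ((continuous_norm (E := E)).rpow_const fun _ ↦ .inr hq.le).tendsto 0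

lemma norm_normalize_le_one {E : Type*} [NormedAddCommGroup E] [NormedSpace ℝ E] (z : E) :
    ‖normalize z‖ ≤ 1 := by
  rw [NormedSpace.normalize, norm_smul, norm_inv, norm_norm]
  exact inv_mul_le_one

variable {V : Type*} [NormedAddCommGroup V] [InnerProductSpace ℝ V] {q : ℝ}

/-- The map `z ↦ |z|^q z`. The substitution `u = radialPower q ∘ φ` turns the `L^(2q + 2)` form of a
divergence-form operator, tested against `radialPower (2 * q) ∘ φ`, into an `L²` form. -/
noncomputable def radialPower (q : ℝ) (z : V) : V := ‖z‖ ^ q • z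

/-- The derivative `|z|^q (1 + q ẑ ẑᵀ)`, `ẑ = normalize z`, of `radialPower q` at `z`.
The junk value `ẑ = 0` at `z = 0` is harmless. -/
noncomputable def radialPowerDeriv (q : ℝ) (z : V) : V →L[ℝ] V :=
  ‖z‖ ^ q • (ContinuousLinearMap.id ℝ V
    + q • (innerSL ℝ (normalize z)).smulRight (normalize z))

@[simp]
lemma radialPower_zero_right (q : ℝ) : radialPower q (0 : V) = 0 := smul_zero _

lemma tsupport_radialPower_comp_subset {E : Type*} [TopologicalSpace E] (q : ℝ) (φ : E → V) :
    tsupport (fun x ↦ radialPower q (φ x)) ⊆ tsupport φ :=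
  tsupport_comp_subset (radialPower_zero_right q) φ

lemma hasCompactSupport_radialPower_comp {E : Type*} [TopologicalSpace E] {φ : E → V}
    (hφ : HasCompactSupport φ) (q : ℝ) : HasCompactSupport fun x ↦ radialPower q (φ x) :=
  hφ.comp_left (g := radialPower q) (radialPower_zero_right q)

lemma norm_radialPower (hq : 0 ≤ q) (z : V) : ‖radialPower q z‖ = ‖z‖ ^ (q + 1) := by
  rw [radialPower, norm_smul, Real.norm_of_nonneg (by positivity),
    Real.rpow_add_one' (norm_nonneg z) (by positivity)]

lemma inner_radialPower_two_mul_self (hq : 0 ≤ q) (z : V) :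
    inner ℝ (radialPower (2 * q) z) z = ‖radialPower q z‖ ^ 2 := by
  rw [norm_radialPower hq, radialPower, real_inner_smul_left, real_inner_self_eq_norm_sq,
    ← Real.rpow_mul_natCast (norm_nonneg z), ← Real.rpow_natCast,
    ← Real.rpow_add' (norm_nonneg z) (by positivity)]
  congr 1
  push_cast
  ring

lemma radialPowerDeriv_apply (q : ℝ) (z w : V) :
    radialPowerDeriv q z w
      = ‖z‖ ^ q • (w + (q * inner ℝ (normalize z) w) • normalize z) := by
  simp [radialPowerDeriv, mul_smul]

lemma radialPowerDeriv_zero_left (z : V) :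
    radialPowerDeriv 0 z = ContinuousLinearMap.id ℝ V := by
  simp [radialPowerDeriv]

lemma radialPowerDeriv_zero_right (hq : q ≠ 0) : radialPowerDeriv q (0 : V) = 0 := by
  simp [radialPowerDeriv, hq]

lemma norm_radialPowerDeriv_le (hq : 0 ≤ q) (z : V) :
    ‖radialPowerDeriv q z‖ ≤ (1 + q) * ‖z‖ ^ q := by
  have hz := norm_normalize_le_one z
  have hrank_one : ‖(innerSL ℝ (normalize z)).smulRight (normalize z)‖ ≤ 1 := by
    rw [ContinuousLinearMap.norm_smulRight_apply, innerSL_apply_norm]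
    exact mul_le_one₀ hz (norm_nonneg _) hz
  calc ‖radialPowerDeriv q z‖
      ≤ ‖z‖ ^ q * (‖ContinuousLinearMap.id ℝ V‖
          + q * ‖(innerSL ℝ (normalize z)).smulRight (normalize z)‖) := by
        rw [radialPowerDeriv, norm_smul, Real.norm_of_nonneg (by positivity)]
        gcongr
        refine (norm_add_le _ _).trans_eq ?_
        rw [norm_smul, Real.norm_of_nonneg hq]
    _ ≤ ‖z‖ ^ q * (1 + q * 1) := by
        gcongr
        exact ContinuousLinearMap.norm_id_le
    _ = (1 + q) * ‖z‖ ^ q := by ring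

lemma hasFDerivAt_norm_rpow_of_ne_zero_s10 (q : ℝ) {z : V} (hz : z ≠ 0) :
    HasFDerivAt (fun x : V ↦ ‖x‖ ^ q) ((q * ‖z‖ ^ (q - 2)) • innerSL ℝ z) z := by
  refine HasStrictFDerivAt.hasFDerivAt ?_
  convert! (hasStrictFDerivAt_norm_sq z).rpow_const (p := q / 2) (by simp [hz]) using 0
  simp_rw [← Real.rpow_natCast_mul (norm_nonneg _), ← Nat.cast_smul_eq_nsmul ℝ, smul_smul]
  ring_nf

lemma hasFDerivAt_radialPower_zero (hq : 0 < q) :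
    HasFDerivAt (radialPower q : V → V) (0 : V →L[ℝ] V) 0 := by
  refine .of_isLittleO ?_
  have h : (fun z : V ↦ ‖z‖ ^ q) =o[nhds 0] fun _ ↦ (1 : ℝ) :=
    (Asymptotics.isLittleO_const_iff one_ne_zero).mpr (tendsto_norm_rpow_zero hq)
  simpa [radialPower] using h.smul_isBigO (Asymptotics.isBigO_refl (fun z : V ↦ z) (nhds 0))

lemma hasFDerivAt_radialPower (hq : 0 ≤ q) (z : V) :
    HasFDerivAt (radialPower q) (radialPowerDeriv q z) z := by
  rcases hq.eq_or_lt with rfl | hq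
  · rw [radialPowerDeriv_zero_left]
    exact (hasFDerivAt_id z).congr_of_eventuallyEq (.of_forall fun x ↦ by simp [radialPower])
  rcases eq_or_ne z 0 with rfl | hz
  · rw [radialPowerDeriv_zero_right hq.ne']
    exact hasFDerivAt_radialPower_zero hq
  refine ((hasFDerivAt_norm_rpow_of_ne_zero_s10 q hz).smul (hasFDerivAt_id z)).congr_fderiv ?_
  ext w
  have hz' : ‖z‖ ≠ 0 := norm_ne_zero_iff.mpr hz
  have hpow : ‖z‖ ^ (q - 2) = ‖z‖ ^ q * (‖z‖⁻¹ * ‖z‖⁻¹) := by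
    rw [Real.rpow_sub (norm_pos_iff.mpr hz), Real.rpow_two]
    field_simp
  simp only [radialPowerDeriv_apply, hpow, add_apply, smul_apply,
    ContinuousLinearMap.smulRight_apply, ContinuousLinearMap.id_apply, innerSL_apply_apply,
    smul_add, smul_smul, id_eq, smul_eq_mul, NormedSpace.normalize, real_inner_smul_left]
  ring_nf

lemma continuous_radialPowerDeriv (hq : 0 ≤ q) :
    Continuous (radialPowerDeriv q : V → V →L[ℝ] V) := by
  rcases hq.eq_or_lt with rfl | hq
  · simpa only [funext radialPowerDeriv_zero_left] using! continuous_const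
  refine continuous_iff_continuousAt.mpr fun z ↦ ?_
  rcases eq_or_ne z 0 with rfl | hz
  · rw [ContinuousAt, radialPowerDeriv_zero_right hq.ne']
    refine squeeze_zero_norm (norm_radialPowerDeriv_le hq.le) ?_
    simpa using (tendsto_norm_rpow_zero hq).const_mul (1 + q)
  · have hz' : ‖z‖ ≠ 0 := norm_ne_zero_iff.mpr hz
    have hunit : ContinuousAt (normalize : V → V) z :=
      (continuousAt_id.norm.inv₀ hz').smul continuousAt_id
    have hrank_one : Continuous fun x : V ↦ (innerSL ℝ x).smulRight x := by fun_prop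
    exact (continuousAt_id.norm.rpow_const (.inl hz')).smul
      (continuousAt_const.add ((hrank_one.continuousAt.comp hunit).const_smul q))

lemma contDiff_radialPower (hq : 0 ≤ q) : ContDiff ℝ 1 (radialPower q : V → V) := by
  refine contDiff_one_iff_fderiv.mpr
    ⟨fun z ↦ (hasFDerivAt_radialPower hq z).differentiableAt, ?_⟩
  rw [funext fun z : V ↦ (hasFDerivAt_radialPower hq z).fderiv]
  exact continuous_radialPowerDeriv hq

lemma contDiff_radialPower_comp {E : Type*} [NormedAddCommGroup E] [NormedSpace ℝ E] {φ : E → V}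
    (hφ : ContDiff ℝ 1 φ) (hq : 0 ≤ q) : ContDiff ℝ 1 fun x ↦ radialPower q (φ x) :=
  (contDiff_radialPower hq).comp hφ

lemma inner_radialPowerDeriv_apply_self (q : ℝ) (z w : V) :
    inner ℝ (radialPowerDeriv q z w) w
      = ‖z‖ ^ q * (‖w‖ ^ 2 + q * inner ℝ (normalize z) w ^ 2) := by
  rw [radialPowerDeriv_apply, real_inner_smul_left, inner_add_left, real_inner_smul_left,
    real_inner_self_eq_norm_sq]
  ring

lemma norm_sq_radialPowerDeriv_apply_le (q : ℝ) (z w : V) :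
    ‖radialPowerDeriv q z w‖ ^ 2
      ≤ ‖z‖ ^ (2 * q) * (‖w‖ ^ 2 + (2 * q + q ^ 2) * inner ℝ (normalize z) w ^ 2) := by
  have hsq : (‖z‖ ^ q) ^ 2 = ‖z‖ ^ (2 * q) := by
    rw [← Real.rpow_mul_natCast (norm_nonneg z), mul_comm 2 q, Nat.cast_ofNat]
  rw [radialPowerDeriv_apply, norm_smul, mul_pow, Real.norm_of_nonneg (by positivity), hsq,
    norm_add_sq_real, real_inner_smul_right, real_inner_comm (normalize z) w, norm_smul, mul_pow,
    Real.norm_eq_abs, sq_abs]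
  gcongr ‖z‖ ^ (2 * q) * ?_
  have hz : ‖normalize z‖ ^ 2 ≤ 1 := pow_le_one₀ (norm_nonneg _) (norm_normalize_le_one z)
  linarith [mul_le_mul_of_nonneg_left hz (sq_nonneg (q * inner ℝ (normalize z) w))]

lemma mul_norm_sq_radialPowerDeriv_le_inner (hq : 0 ≤ q) (z w : V) :
    (1 - (q / (q + 1)) ^ 2) * ‖radialPowerDeriv q z w‖ ^ 2
      ≤ inner ℝ (radialPowerDeriv (2 * q) z w) w := by
  have hcoeff : 1 - (q / (q + 1)) ^ 2 = (2 * q + 1) / (q + 1) ^ 2 := by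
    field_simp
    ring
  have hcauchy : inner ℝ (normalize z) w ^ 2 ≤ ‖w‖ ^ 2 := by
    rw [← sq_abs]
    gcongr
    exact (abs_real_inner_le_norm _ w).trans
      (mul_le_of_le_one_left (norm_nonneg w) (norm_normalize_le_one z))
  rw [inner_radialPowerDeriv_apply_self, hcoeff, div_mul_eq_mul_div, div_le_iff₀ (by positivity)]
  set s := inner ℝ (normalize z) w
  calc (2 * q + 1) * ‖radialPowerDeriv q z w‖ ^ 2
      ≤ (2 * q + 1) * (‖z‖ ^ (2 * q) * (‖w‖ ^ 2 + (2 * q + q ^ 2) * s ^ 2)) := by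
        gcongr
        exact norm_sq_radialPowerDeriv_apply_le q z w
    _ = ‖z‖ ^ (2 * q) * (‖w‖ ^ 2 + 2 * q * s ^ 2) * (q + 1) ^ 2
          - q ^ 2 * ‖z‖ ^ (2 * q) * (‖w‖ ^ 2 - s ^ 2) := by ring
    _ ≤ ‖z‖ ^ (2 * q) * (‖w‖ ^ 2 + 2 * q * s ^ 2) * (q + 1) ^ 2 :=
        sub_le_self _ (mul_nonneg (by positivity) (sub_nonneg.mpr hcauchy))

lemma fderiv_radialPower_comp_apply {E : Type*} [NormedAddCommGroup E] [NormedSpace ℝ E]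
    {φ : E → V} (hφ : Differentiable ℝ φ) (hq : 0 ≤ q) (y v : E) :
    fderiv ℝ (fun x ↦ radialPower q (φ x)) y v
      = radialPowerDeriv q (φ y) (fderiv ℝ φ y v) := by
  rw [show fderiv ℝ (fun x ↦ radialPower q (φ x)) y = _ from
    ((hasFDerivAt_radialPower hq (φ y)).comp y (hφ y).hasFDerivAt).fderiv]
  rfl

lemma mul_norm_sq_fderiv_radialPower_le_inner {E : Type*} [NormedAddCommGroup E]
    [NormedSpace ℝ E] {φ : E → V} (hφ : Differentiable ℝ φ) (hq : 0 ≤ q) (y v : E) :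
    (1 - (q / (q + 1)) ^ 2) * ‖fderiv ℝ (fun x ↦ radialPower q (φ x)) y v‖ ^ 2
      ≤ inner ℝ (fderiv ℝ (fun x ↦ radialPower (2 * q) (φ x)) y v) (fderiv ℝ φ y v) := by
  rw [fderiv_radialPower_comp_apply hφ hq, fderiv_radialPower_comp_apply hφ (by positivity)]
  exact mul_norm_sq_radialPowerDeriv_le_inner hq _ _

end RadialPower

section Hardy

variable {E : Type*} [NormedAddCommGroup E]

lemma integral_fderiv_apply_self_s10 [NormedSpace ℝ E] [FiniteDimensional ℝ E] [MeasurableSpace E]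
    [BorelSpace E] (μ : Measure E) [μ.IsAddHaarMeasure] {F : Type*} [NormedAddCommGroup F]
    [NormedSpace ℝ F] {g : E → F} (hg : ContDiff ℝ 1 g) (hgc : HasCompactSupport g) :
    ∫ y, fderiv ℝ g y y ∂μ = -((Module.finrank ℝ E : ℝ) • ∫ y, g y ∂μ) := by
  let b := Module.finBasis ℝ E
  let coord i : E →L[ℝ] ℝ := (b.coord i).toContinuousLinearMap
  have hdg := fun i ↦ (hg.continuous_fderiv one_ne_zero).clm_apply (continuous_const (y := b i))
  have hexpand : ∀ y, fderiv ℝ g y y = ∑ i, coord i y • fderiv ℝ g y (b i) := fun y ↦ by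
    conv_lhs => rw [← b.sum_repr y, map_sum]
    simp [coord]
  have hdgc := fun i ↦ hgc.fderiv_apply (𝕜 := ℝ) (b i)
  have hint : ∀ i, Integrable (fun y ↦ coord i y • fderiv ℝ g y (b i)) μ := fun i ↦
    ((coord i).continuous.smul (hdg i)).integrable_of_hasCompactSupport (hdgc i).smul_left
  have hparts : ∀ i, ∫ y, coord i y • fderiv ℝ g y (b i) ∂μ = -∫ y, g y ∂μ := fun i ↦ by
    rw [integral_smul_fderiv_eq_neg_fderiv_smul_of_integrable _ (hint i) _
      (fun y _ ↦ (coord i).differentiableAt) (fun y _ ↦ hg.differentiable one_ne_zero y)]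
    · simp only [ContinuousLinearMap.fderiv]
      simp [coord]
    · exact Continuous.integrable_of_hasCompactSupport (by fun_prop) hgc.smul_left
    · exact Continuous.integrable_of_hasCompactSupport (by fun_prop) hgc.smul_left
  simp only [hexpand]
  rw [integral_finsetSum _ fun i _ ↦ hint i, Finset.sum_congr rfl fun i _ ↦ hparts i]
  simp [Nat.cast_smul_eq_nsmul]

variable [InnerProductSpace ℝ E] {F : Type*} [NormedAddCommGroup F]

lemma contDiff_inv_norm_sq_smul [NormedSpace ℝ F] {n : WithTop ℕ∞} {f : E → F}
    (hf : ContDiff ℝ n f) (hf0 : f =ᶠ[nhds 0] 0) : ContDiff ℝ n fun y ↦ (‖y‖ ^ 2)⁻¹ • f y := by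
  refine contDiff_iff_contDiffAt.mpr fun x ↦ ?_
  rcases eq_or_ne x 0 with rfl | hx0
  · refine (contDiffAt_const (c := (0 : F))).congr_of_eventuallyEq ?_
    filter_upwards [hf0] with y hy
    rw [hy, Pi.zero_apply, smul_zero]
  · exact ((contDiff_norm_sq ℝ).contDiffAt.inv (by simpa using hx0)).smul hf.contDiffAt

lemma fderiv_inv_norm_sq_mul_apply_self {g : E → ℝ} (hg : Differentiable ℝ g) (y : E) :
    fderiv ℝ (fun z ↦ (‖z‖ ^ 2)⁻¹ * g z) y y = (‖y‖ ^ 2)⁻¹ * (fderiv ℝ g y y - 2 * g y) := by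
  rcases eq_or_ne y 0 with rfl | hy
  · simp
  have hy' : ‖y‖ ≠ 0 := norm_ne_zero_iff.mpr hy
  have hinv : HasFDerivAt (fun z : E ↦ (‖z‖ ^ 2)⁻¹)
      (-((‖y‖ ^ 2) ^ 2)⁻¹ • (2 • innerSL ℝ y)) y :=
    (hasDerivAt_inv (pow_ne_zero 2 hy')).comp_hasFDerivAt y
      (hasStrictFDerivAt_norm_sq y).hasFDerivAt
  rw [(hinv.fun_mul (hg y).hasFDerivAt).fderiv]
  simp only [add_apply, smul_apply, innerSL_apply_apply, real_inner_self_eq_norm_sq, smul_eq_mul,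
    nsmul_eq_mul, Nat.cast_ofNat]
  field_simp
  ring

variable [MeasurableSpace E] [BorelSpace E]

lemma integrable_inv_norm_sq_mul (μ : Measure E) [IsFiniteMeasureOnCompacts μ] {K : Set E}
    (hK : IsCompact K) (h0 : 0 ∉ K) {f : E → ℝ} (hf : Continuous f) (hfK : ∀ y ∉ K, f y = 0) :
    Integrable (fun y ↦ (‖y‖ ^ 2)⁻¹ * f y) μ := by
  have hf0 : f =ᶠ[nhds 0] 0 := by
    filter_upwards [hK.isClosed.isOpen_compl.mem_nhds h0] with y hy using hfK y hy
  exact (contDiff_inv_norm_sq_smul (contDiff_zero.mpr hf) hf0).continuous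
    |>.integrable_of_hasCompactSupport (.intro hK fun y hy ↦ by simp [hfK y hy])

lemma integrable_inv_norm_sq_mul_norm_sq (μ : Measure E) [IsFiniteMeasureOnCompacts μ] {u : E → F}
    (hu : Continuous u) (huc : HasCompactSupport u) (h0 : 0 ∉ tsupport u) :
    Integrable (fun y ↦ (‖y‖ ^ 2)⁻¹ * ‖u y‖ ^ 2) μ :=
  integrable_inv_norm_sq_mul μ huc h0 (hu.norm.pow 2) fun y hy ↦ by
    simp [image_eq_zero_of_notMem_tsupport hy]

lemma integrable_inv_norm_sq_mul_norm_sq_fderiv_apply_self [NormedSpace ℝ F] (μ : Measure E)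
    [IsFiniteMeasureOnCompacts μ] {u : E → F} (hu : ContDiff ℝ 1 u) (huc : HasCompactSupport u)
    (h0 : 0 ∉ tsupport u) : Integrable (fun y ↦ (‖y‖ ^ 2)⁻¹ * ‖fderiv ℝ u y y‖ ^ 2) μ :=
  integrable_inv_norm_sq_mul μ huc h0
    (((hu.continuous_fderiv one_ne_zero).clm_apply continuous_id).norm.pow 2) fun y hy ↦ by
      simp [fderiv_of_notMem_tsupport ℝ hy]

lemma integrable_inv_norm_sq_mul_inner_fderiv_apply_self [InnerProductSpace ℝ F] (μ : Measure E)
    [IsFiniteMeasureOnCompacts μ] {u : E → F} (hu : ContDiff ℝ 1 u) (huc : HasCompactSupport u)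
    (h0 : 0 ∉ tsupport u) :
    Integrable (fun y ↦ (‖y‖ ^ 2)⁻¹ * inner ℝ (fderiv ℝ u y y) (u y)) μ :=
  integrable_inv_norm_sq_mul μ huc h0
    (((hu.continuous_fderiv one_ne_zero).clm_apply continuous_id).inner hu.continuous)
    fun y hy ↦ by simp [image_eq_zero_of_notMem_tsupport hy]

variable [FiniteDimensional ℝ E] [InnerProductSpace ℝ F] (μ : Measure E) [μ.IsAddHaarMeasure]
  {u : E → F}

lemma integral_inv_norm_sq_mul_inner_fderiv_apply_self (hu : ContDiff ℝ 1 u)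
    (huc : HasCompactSupport u) (h0 : 0 ∉ tsupport u) :
    ∫ y, (‖y‖ ^ 2)⁻¹ * inner ℝ (fderiv ℝ u y y) (u y) ∂μ
      = -(((Module.finrank ℝ E : ℝ) - 2) / 2) * ∫ y, (‖y‖ ^ 2)⁻¹ * ‖u y‖ ^ 2 ∂μ := by
  have hsq : ContDiff ℝ 1 fun y ↦ ‖u y‖ ^ 2 := hu.norm_sq ℝ
  have hvanish : (fun y ↦ ‖u y‖ ^ 2) =ᶠ[nhds 0] 0 := by
    filter_upwards [notMem_tsupport_iff_eventuallyEq.mp h0] with y hy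
    simp [hy]
  have hdiv : ∫ y, fderiv ℝ (fun z ↦ (‖z‖ ^ 2)⁻¹ * ‖u z‖ ^ 2) y y ∂μ
      = -((Module.finrank ℝ E : ℝ) * ∫ y, (‖y‖ ^ 2)⁻¹ * ‖u y‖ ^ 2 ∂μ) :=
    integral_fderiv_apply_self_s10 μ (contDiff_inv_norm_sq_smul hsq hvanish)
      (huc.mono fun y hy h ↦ hy (by simp [h]))
  have hderiv : ∀ y, fderiv ℝ (fun z ↦ (‖z‖ ^ 2)⁻¹ * ‖u z‖ ^ 2) y y
      = 2 * ((‖y‖ ^ 2)⁻¹ * inner ℝ (fderiv ℝ u y y) (u y))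
        - 2 * ((‖y‖ ^ 2)⁻¹ * ‖u y‖ ^ 2) := fun y ↦ by
    rw [fderiv_inv_norm_sq_mul_apply_self (hsq.differentiable one_ne_zero),
      ((hu.differentiable one_ne_zero y).hasFDerivAt.norm_sq).fderiv]
    simp only [smul_apply, ContinuousLinearMap.comp_apply, innerSL_apply_apply, real_inner_comm,
      nsmul_eq_mul, Nat.cast_ofNat]
    ring
  have hint_inner := integrable_inv_norm_sq_mul_inner_fderiv_apply_self μ hu huc h0
  have hint_sq := integrable_inv_norm_sq_mul_norm_sq μ hu.continuous huc h0
  simp only [hderiv] at hdiv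
  rw [integral_sub (hint_inner.const_mul 2) (hint_sq.const_mul 2), integral_const_mul,
    integral_const_mul] at hdiv
  linarith

lemma hardy_radial (hu : ContDiff ℝ 1 u) (huc : HasCompactSupport u) (h0 : 0 ∉ tsupport u) :
    (((Module.finrank ℝ E : ℝ) - 2) / 2) ^ 2 * ∫ y, (‖y‖ ^ 2)⁻¹ * ‖u y‖ ^ 2 ∂μ
      ≤ ∫ y, (‖y‖ ^ 2)⁻¹ * ‖fderiv ℝ u y y‖ ^ 2 ∂μ := by
  set s := ((Module.finrank ℝ E : ℝ) - 2) / 2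
  have hint_fderiv := integrable_inv_norm_sq_mul_norm_sq_fderiv_apply_self μ hu huc h0
  have hint_inner := integrable_inv_norm_sq_mul_inner_fderiv_apply_self μ hu huc h0
  have hint_sq := integrable_inv_norm_sq_mul_norm_sq μ hu.continuous huc h0
  have hsquare : 0 ≤ ∫ y, (‖y‖ ^ 2)⁻¹ * ‖fderiv ℝ u y y + s • u y‖ ^ 2 ∂μ :=
    integral_nonneg fun y ↦ by positivity
  have hexpand : ∀ y, (‖y‖ ^ 2)⁻¹ * ‖fderiv ℝ u y y + s • u y‖ ^ 2
      = (‖y‖ ^ 2)⁻¹ * ‖fderiv ℝ u y y‖ ^ 2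
        + 2 * s * ((‖y‖ ^ 2)⁻¹ * inner ℝ (fderiv ℝ u y y) (u y))
        + s ^ 2 * ((‖y‖ ^ 2)⁻¹ * ‖u y‖ ^ 2) := fun y ↦ by
    rw [norm_add_sq_real, real_inner_smul_right, norm_smul, mul_pow, Real.norm_eq_abs, sq_abs]
    ring
  have hcross : ∫ y, (‖y‖ ^ 2)⁻¹ * inner ℝ (fderiv ℝ u y y) (u y) ∂μ
      = -s * ∫ y, (‖y‖ ^ 2)⁻¹ * ‖u y‖ ^ 2 ∂μ :=
    integral_inv_norm_sq_mul_inner_fderiv_apply_self μ hu huc h0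
  simp only [hexpand] at hsquare
  rw [integral_add (hint_fderiv.fun_add (hint_inner.const_mul _)) (hint_sq.const_mul _),
    integral_add hint_fderiv (hint_inner.const_mul _), integral_const_mul, integral_const_mul,
    hcross] at hsquare
  linarith

lemma mul_integral_inv_norm_sq_mul_norm_sq_le (hu : ContDiff ℝ 1 u) (huc : HasCompactSupport u)
    (h0 : 0 ∉ tsupport u) {κ c : ℝ} (hκ : 0 ≤ κ)
    (hc : c ≤ (((Module.finrank ℝ E : ℝ) - 2) / 2) ^ 2 * κ) :
    c * ∫ y, (‖y‖ ^ 2)⁻¹ * ‖u y‖ ^ 2 ∂μ ≤ κ * ∫ y, (‖y‖ ^ 2)⁻¹ * ‖fderiv ℝ u y y‖ ^ 2 ∂μ := by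
  set s := ((Module.finrank ℝ E : ℝ) - 2) / 2
  calc c * ∫ y, (‖y‖ ^ 2)⁻¹ * ‖u y‖ ^ 2 ∂μ
      ≤ s ^ 2 * κ * ∫ y, (‖y‖ ^ 2)⁻¹ * ‖u y‖ ^ 2 ∂μ := by gcongr
    _ = κ * (s ^ 2 * ∫ y, (‖y‖ ^ 2)⁻¹ * ‖u y‖ ^ 2 ∂μ) := by ring
    _ ≤ κ * ∫ y, (‖y‖ ^ 2)⁻¹ * ‖fderiv ℝ u y y‖ ^ 2 ∂μ := by
        gcongr
        exact hardy_radial μ hu huc h0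

end Hardy

section Sobolev

variable {F : Type*} [NormedAddCommGroup F]

lemma integral_norm_rpow_le_integral_norm_fderiv_rpow [InnerProductSpace ℝ F] {E : Type*}
    [NormedAddCommGroup E] [NormedSpace ℝ E] [FiniteDimensional ℝ E] [MeasurableSpace E]
    [BorelSpace E] (μ : Measure E) [μ.IsAddHaarMeasure] {u : E → F} (hu : ContDiff ℝ 1 u)
    (huc : HasCompactSupport u) {p p' : NNReal} (hp : 1 ≤ p) (hp'0 : p' ≠ 0)
    (hE : 0 < Module.finrank ℝ E) (hp' : (p' : ℝ)⁻¹ = (p : ℝ)⁻¹ - (Module.finrank ℝ E : ℝ)⁻¹) :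
    (∫ y, ‖u y‖ ^ (p' : ℝ) ∂μ) ^ (p' : ℝ)⁻¹
      ≤ eLpNormLESNormFDerivOfEqInnerConst μ p
        * (∫ y, ‖fderiv ℝ u y‖ ^ (p : ℝ) ∂μ) ^ (p : ℝ)⁻¹ := by
  have hp0 : p ≠ 0 := (zero_lt_one.trans_le hp).ne'
  have hu_memLp : MemLp u p' μ := hu.continuous.memLp_of_hasCompactSupport huc
  have hdu_memLp : MemLp (fderiv ℝ u) p μ :=
    (hu.continuous_fderiv one_ne_zero).memLp_of_hasCompactSupport (huc.fderiv (𝕜 := ℝ))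
  have hsobolev := eLpNorm_le_eLpNorm_fderiv_of_eq_inner μ hu huc hp hE hp'
  rwa [hu_memLp.eLpNorm_eq_integral_rpow_norm (by simpa using hp'0) ENNReal.coe_ne_top,
    hdu_memLp.eLpNorm_eq_integral_rpow_norm (by simpa using hp0) ENNReal.coe_ne_top,
    ENNReal.coe_toReal, ENNReal.coe_toReal,
    ← ENNReal.ofReal_coe_nnreal (p := eLpNormLESNormFDerivOfEqInnerConst μ p),
    ← ENNReal.ofReal_mul NNReal.zero_le_coe,
    ENNReal.ofReal_le_ofReal_iff (by positivity)] at hsobolev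

variable {ι : Type*} [Fintype ι] [DecidableEq ι]

lemma sum_coord_smul_apply_single [NormedSpace ℝ F] (T : EuclideanSpace ℝ ι →L[ℝ] F)
    (v : EuclideanSpace ℝ ι) : ∑ i, v i • T (EuclideanSpace.single i 1) = T v := by
  conv_rhs => rw [← (EuclideanSpace.basisFun ι ℝ).sum_repr v]
  simp [map_sum]

lemma norm_sq_apply_le_sum_norm_sq_single [NormedSpace ℝ F] (T : EuclideanSpace ℝ ι →L[ℝ] F)
    (v : EuclideanSpace ℝ ι) :
    ‖T v‖ ^ 2 ≤ ‖v‖ ^ 2 * ∑ i, ‖T (EuclideanSpace.single i 1)‖ ^ 2 := by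
  rw [← sum_coord_smul_apply_single T v, EuclideanSpace.norm_sq_eq]
  refine le_trans ?_ (Finset.sum_mul_sq_le_sq_mul_sq _ _ _)
  gcongr
  exact (norm_sum_le _ _).trans_eq (Finset.sum_congr rfl fun i _ ↦ norm_smul _ _)

lemma norm_sq_le_sum_norm_sq_single [NormedSpace ℝ F] (T : EuclideanSpace ℝ ι →L[ℝ] F) :
    ‖T‖ ^ 2 ≤ ∑ i, ‖T (EuclideanSpace.single i 1)‖ ^ 2 := by
  refine (Real.le_sqrt (norm_nonneg T) (by positivity)).mp <|
    T.opNorm_le_bound (Real.sqrt_nonneg _) fun v ↦ le_of_sq_le_sq ?_ (by positivity)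
  rw [mul_pow, Real.sq_sqrt (by positivity), mul_comm]
  exact norm_sq_apply_le_sum_norm_sq_single T v

/-- The partial derivative `∂ᵢ f` of a function on `ℝ^ι`. -/
noncomputable abbrev partialDeriv [NormedSpace ℝ F] (i : ι) (f : EuclideanSpace ℝ ι → F)
    (y : EuclideanSpace ℝ ι) : F :=
  fderiv ℝ f y (EuclideanSpace.single i 1)

lemma integrable_sum_norm_sq_partialDeriv [NormedSpace ℝ F] (μ : Measure (EuclideanSpace ℝ ι))
    [IsFiniteMeasureOnCompacts μ] {u : EuclideanSpace ℝ ι → F} (hu : ContDiff ℝ 1 u)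
    (huc : HasCompactSupport u) : Integrable (fun y ↦ ∑ i, ‖partialDeriv i u y‖ ^ 2) μ :=
  (continuous_finsetSum _ fun _ _ ↦
      ((hu.continuous_fderiv one_ne_zero).clm_apply continuous_const).norm.pow 2)
    |>.integrable_of_hasCompactSupport
      (.intro huc fun y hy ↦ by simp [fderiv_of_notMem_tsupport ℝ hy])

lemma exists_sobolev_sum_norm_sq_partialDeriv [InnerProductSpace ℝ F] (hι : 3 ≤ Fintype.card ι) :
    ∃ S > (0 : ℝ), ∀ u : EuclideanSpace ℝ ι → F, ContDiff ℝ 1 u → HasCompactSupport u →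
      (∫ y, ‖u y‖ ^ (2 * Fintype.card ι / ((Fintype.card ι : ℝ) - 2)))
          ^ (((Fintype.card ι : ℝ) - 2) / Fintype.card ι)
        ≤ S * ∫ y, ∑ i, ‖partialDeriv i u y‖ ^ 2 := by
  set n := (Fintype.card ι : ℝ)
  have hn3 : 3 ≤ n := Nat.ofNat_le_cast.mpr hι
  have hn0 : n ≠ 0 := by linarith
  have hn : 0 < n - 2 := by linarith
  set p' : NNReal := ⟨2 * n / (n - 2), by positivity⟩
  have hp' : (p' : ℝ) = 2 * n / (n - 2) := rfl
  have hp'0 : p' ≠ 0 := by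
    rw [← NNReal.coe_ne_zero, hp']
    positivity
  set C := (eLpNormLESNormFDerivOfEqInnerConst (volume : Measure (EuclideanSpace ℝ ι)) 2 : ℝ)
  refine ⟨C ^ 2 + 1, by positivity, fun u hu huc ↦ ?_⟩
  have hgrad_le : ∫ y, ‖fderiv ℝ u y‖ ^ 2 ≤ ∫ y, ∑ i, ‖partialDeriv i u y‖ ^ 2 :=
    integral_mono_of_nonneg (.of_forall fun y ↦ by positivity)
      (integrable_sum_norm_sq_partialDeriv volume hu huc)
      (.of_forall fun y ↦ norm_sq_le_sum_norm_sq_single _)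
  have hgns := integral_norm_rpow_le_integral_norm_fderiv_rpow volume hu huc one_le_two hp'0
    (by simpa using! (by lia : 0 < Fintype.card ι))
    (by
      rw [hp', finrank_euclideanSpace, NNReal.coe_ofNat]
      change (2 * n / (n - 2))⁻¹ = 2⁻¹ - n⁻¹
      field_simp [hn0])
  rw [hp', NNReal.coe_ofNat] at hgns
  simp only [Real.rpow_ofNat] at hgns
  have hexp : (n - 2) / n = (2 * n / (n - 2))⁻¹ * (2 : ℕ) := by
    field_simp
    norm_num
  calc (∫ y, ‖u y‖ ^ (2 * n / (n - 2))) ^ ((n - 2) / n)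
      = ((∫ y, ‖u y‖ ^ (2 * n / (n - 2))) ^ (2 * n / (n - 2))⁻¹) ^ 2 := by
        rw [hexp, Real.rpow_mul_natCast (by positivity)]
    _ ≤ (C * (∫ y, ‖fderiv ℝ u y‖ ^ 2) ^ (2 : ℝ)⁻¹) ^ 2 := by gcongr
    _ = C ^ 2 * ∫ y, ‖fderiv ℝ u y‖ ^ 2 := by
        rw [mul_pow, ← Real.rpow_mul_natCast (by positivity)]
        norm_num
    _ ≤ (C ^ 2 + 1) * ∫ y, ∑ i, ‖partialDeriv i u y‖ ^ 2 := by
        gcongr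
        linarith

end Sobolev

section AnisotropicOperator

lemma integral_inner_fderiv_eq_neg {E V : Type*} [NormedAddCommGroup E] [NormedSpace ℝ E]
    [FiniteDimensional ℝ E] [MeasurableSpace E] [BorelSpace E] (μ : Measure E)
    [μ.IsAddHaarMeasure] [NormedAddCommGroup V] [InnerProductSpace ℝ V] {f g : E → V}
    (hf : ContDiff ℝ 1 f) (hg : ContDiff ℝ 1 g) (hgc : HasCompactSupport g) (v : E) :
    ∫ y, inner ℝ (f y) (fderiv ℝ g y v) ∂μ = -∫ y, inner ℝ (fderiv ℝ f y v) (g y) ∂μ := by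
  have hdf : Continuous fun y ↦ fderiv ℝ f y v :=
    (hf.continuous_fderiv one_ne_zero).clm_apply continuous_const
  have hdg : Continuous fun y ↦ fderiv ℝ g y v :=
    (hg.continuous_fderiv one_ne_zero).clm_apply continuous_const
  refine integral_bilinear_fderiv_right_eq_neg_left_of_integrable (B := innerSL ℝ) ?_ ?_ ?_
    (fun y _ ↦ hf.differentiable one_ne_zero y) (fun y _ ↦ hg.differentiable one_ne_zero y)
  · exact (hdf.inner hg.continuous).integrable_of_hasCompactSupport
      (hgc.mono fun y hy h ↦ hy (by simp [h]))
  · exact (hf.continuous.inner hdg).integrable_of_hasCompactSupport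
      ((hgc.fderiv_apply (𝕜 := ℝ) v).mono fun y hy h ↦ hy (by simp [h]))
  · exact (hf.continuous.inner hg.continuous).integrable_of_hasCompactSupport
      (hgc.mono fun y hy h ↦ hy (by simp [h]))

variable {ι : Type*} [Fintype ι] [DecidableEq ι] {V : Type*} [NormedAddCommGroup V]

section NormedSpace

variable [NormedSpace ℝ V] {κ c : ℝ} {φ : EuclideanSpace ℝ ι → V}

/-- The `i`-th component of the flux `b ∇φ`, where `b(z)` is the matrix `1 + κ z zᵀ / |z|²`. Here
`b(0) = 1` by the convention on division by zero; the flux is only used for `φ` vanishing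
near `0`. -/
noncomputable def anisotropicFlux (κ : ℝ) (φ : EuclideanSpace ℝ ι → V) (i : ι)
    (z : EuclideanSpace ℝ ι) : V :=
  partialDeriv i φ z + (κ * z i / ‖z‖ ^ 2) • ∑ j, z j • partialDeriv j φ z

/-- The operator `φ ↦ -div (b ∇φ) - c |y|⁻² φ`, where `b(z)` is the matrix `1 + κ z zᵀ / |z|²`. -/
noncomputable def anisotropicOperator (κ c : ℝ) (φ : EuclideanSpace ℝ ι → V)
    (y : EuclideanSpace ℝ ι) : V :=
  -(∑ i, partialDeriv i (anisotropicFlux κ φ i) y) - (c / ‖y‖ ^ 2) • φ y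

lemma anisotropicFlux_eq (κ : ℝ) (φ : EuclideanSpace ℝ ι → V) (i : ι) (z : EuclideanSpace ℝ ι) :
    anisotropicFlux κ φ i z = partialDeriv i φ z + (κ * z i) • (‖z‖ ^ 2)⁻¹ • fderiv ℝ φ z z := by
  rw [anisotropicFlux, sum_coord_smul_apply_single, smul_smul, div_eq_mul_inv]

lemma anisotropicFlux_eq_zero_of_notMem_tsupport {z : EuclideanSpace ℝ ι} (hz : z ∉ tsupport φ)
    (κ : ℝ) (i : ι) : anisotropicFlux κ φ i z = 0 := by
  simp [anisotropicFlux, partialDeriv, fderiv_of_notMem_tsupport ℝ hz]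

lemma contDiff_anisotropicFlux (hφ : ContDiff ℝ 2 φ) (h0 : 0 ∉ tsupport φ) (κ : ℝ) (i : ι) :
    ContDiff ℝ 1 (anisotropicFlux κ φ i) := by
  have hdφ : ContDiff ℝ 1 (fderiv ℝ φ) := hφ.fderiv_right (by norm_num)
  have hvanish : (fun z ↦ fderiv ℝ φ z z) =ᶠ[nhds 0] 0 := by
    filter_upwards [(isClosed_tsupport φ).isOpen_compl.mem_nhds h0] with z hz
    simp [fderiv_of_notMem_tsupport ℝ hz]
  have hradial := contDiff_inv_norm_sq_smul (hdφ.clm_apply contDiff_id) hvanish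
  have hcoord : ContDiff ℝ 1 fun z : EuclideanSpace ℝ ι ↦ κ * z i := by fun_prop
  rw [funext (anisotropicFlux_eq κ φ i)]
  exact (hdφ.clm_apply contDiff_const).add (hcoord.smul hradial)

lemma continuous_anisotropicOperator (hφ : ContDiff ℝ 2 φ) (h0 : 0 ∉ tsupport φ) (κ c : ℝ) :
    Continuous (anisotropicOperator κ c φ) := by
  have hpotential : Continuous fun y ↦ (c / ‖y‖ ^ 2) • φ y := by
    simpa only [smul_smul, ← div_eq_mul_inv] using (contDiff_inv_norm_sq_smul hφ
      (notMem_tsupport_iff_eventuallyEq.mp h0)).continuous.fun_const_smul c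
  have hdiv : Continuous fun y ↦ ∑ i, partialDeriv i (anisotropicFlux κ φ i) y :=
    continuous_finsetSum _ fun i _ ↦ ((contDiff_anisotropicFlux hφ h0 κ i).continuous_fderiv
      one_ne_zero).clm_apply continuous_const
  exact hdiv.neg.sub hpotential

end NormedSpace

variable [InnerProductSpace ℝ V] {φ ψ : EuclideanSpace ℝ ι → V} {κ c q : ℝ}

lemma sum_inner_partialDeriv_anisotropicFlux (κ : ℝ) (φ ψ : EuclideanSpace ℝ ι → V)
    (y : EuclideanSpace ℝ ι) :
    ∑ i, inner ℝ (partialDeriv i ψ y) (anisotropicFlux κ φ i y)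
      = ∑ i, inner ℝ (partialDeriv i ψ y) (partialDeriv i φ y)
        + κ * ((‖y‖ ^ 2)⁻¹ * inner ℝ (fderiv ℝ ψ y y) (fderiv ℝ φ y y)) := by
  conv_rhs => enter [2]; rw [← sum_coord_smul_apply_single (fderiv ℝ ψ y) y]
  simp only [anisotropicFlux_eq, inner_add_right, Finset.sum_add_distrib, sum_inner,
    Finset.mul_sum, real_inner_smul_right, real_inner_smul_left]
  congr 1
  exact Finset.sum_congr rfl fun i _ ↦ by ring

lemma integrable_inner_partialDeriv_anisotropicFlux (hφ : ContDiff ℝ 2 φ)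
    (hφc : HasCompactSupport φ) (h0 : 0 ∉ tsupport φ) (hψ : ContDiff ℝ 1 ψ) (κ : ℝ) (i : ι) :
    Integrable fun y ↦ inner ℝ (partialDeriv i ψ y) (anisotropicFlux κ φ i y) :=
  (((hψ.continuous_fderiv one_ne_zero).clm_apply continuous_const).inner
      (contDiff_anisotropicFlux hφ h0 κ i).continuous).integrable_of_hasCompactSupport
    (.intro hφc fun y hy ↦ by simp [anisotropicFlux_eq_zero_of_notMem_tsupport hy])

lemma integral_inner_anisotropicOperator (hφ : ContDiff ℝ 2 φ) (hφc : HasCompactSupport φ)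
    (h0 : 0 ∉ tsupport φ) (hψ : ContDiff ℝ 1 ψ) (κ c : ℝ) :
    ∫ y, inner ℝ (ψ y) (anisotropicOperator κ c φ y)
      = (∫ y, ∑ i, inner ℝ (partialDeriv i ψ y) (anisotropicFlux κ φ i y))
        - c * ∫ y, (‖y‖ ^ 2)⁻¹ * inner ℝ (ψ y) (φ y) := by
  have hflux := contDiff_anisotropicFlux hφ h0 κ
  have hfluxc : ∀ i, HasCompactSupport (anisotropicFlux κ φ i) := fun i ↦
    .intro hφc fun y hy ↦ anisotropicFlux_eq_zero_of_notMem_tsupport hy κ i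
  have hint_div : ∀ i, Integrable fun y ↦
      inner ℝ (ψ y) (partialDeriv i (anisotropicFlux κ φ i) y) := fun i ↦
    (hψ.continuous.inner (((hflux i).continuous_fderiv one_ne_zero).clm_apply continuous_const))
      |>.integrable_of_hasCompactSupport
        (((hfluxc i).fderiv_apply (𝕜 := ℝ) (EuclideanSpace.single i 1)).mono
          fun y hy h ↦ hy (by simp [h]))
  have hint_potential : Integrable fun y ↦ (‖y‖ ^ 2)⁻¹ * inner ℝ (ψ y) (φ y) :=
    integrable_inv_norm_sq_mul _ hφc h0 (hψ.continuous.inner hφ.continuous) fun y hy ↦ by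
      simp [image_eq_zero_of_notMem_tsupport hy]
  have hexpand : ∀ y, inner ℝ (ψ y) (anisotropicOperator κ c φ y)
      = -(∑ i, inner ℝ (ψ y) (partialDeriv i (anisotropicFlux κ φ i) y))
        - c * ((‖y‖ ^ 2)⁻¹ * inner ℝ (ψ y) (φ y)) := fun y ↦ by
    rw [anisotropicOperator, inner_sub_right, inner_neg_right, inner_sum, real_inner_smul_right,
      div_eq_mul_inv, mul_assoc]
  simp only [hexpand]
  rw [integral_sub (integrable_finsetSum _ fun i _ ↦ hint_div i).fun_neg
      (hint_potential.const_mul c), integral_neg, integral_const_mul,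
    integral_finsetSum _ fun i _ ↦ hint_div i, integral_finsetSum _ fun i _ ↦
      integrable_inner_partialDeriv_anisotropicFlux hφ hφc h0 hψ κ i, ← Finset.sum_neg_distrib]
  congr 1
  exact Finset.sum_congr rfl fun i _ ↦ by
    rw [integral_inner_fderiv_eq_neg volume hψ (hflux i) (hfluxc i), neg_neg]

lemma inv_norm_sq_mul_norm_sq_fderiv_apply_self_le (u : EuclideanSpace ℝ ι → V)
    (y : EuclideanSpace ℝ ι) :
    (‖y‖ ^ 2)⁻¹ * ‖fderiv ℝ u y y‖ ^ 2 ≤ ∑ i, ‖partialDeriv i u y‖ ^ 2 := by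
  rcases eq_or_ne y 0 with rfl | hy
  · simp only [norm_zero, map_zero, ne_eq, OfNat.ofNat_ne_zero, not_false_eq_true, zero_pow,
      mul_zero]
    positivity
  · rw [inv_mul_le_iff₀ (by positivity)]
    exact norm_sq_apply_le_sum_norm_sq_single _ y

lemma le_sum_inner_partialDeriv_radialPower_anisotropicFlux (hφ : Differentiable ℝ φ)
    (hκ : 0 ≤ κ) (hq : 0 ≤ q) (y : EuclideanSpace ℝ ι) :
    (1 - (q / (q + 1)) ^ 2 * (1 + κ)) * ∑ i, ‖partialDeriv i (fun x ↦ radialPower q (φ x)) y‖ ^ 2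
        + κ * ((‖y‖ ^ 2)⁻¹ * ‖fderiv ℝ (fun x ↦ radialPower q (φ x)) y y‖ ^ 2)
      ≤ ∑ i, inner ℝ (partialDeriv i (fun x ↦ radialPower (2 * q) (φ x)) y)
          (anisotropicFlux κ φ i y) := by
  set u := fun x ↦ radialPower q (φ x)
  set ψ := fun x ↦ radialPower (2 * q) (φ x)
  set r := q / (q + 1)
  set D := ∑ i, ‖partialDeriv i u y‖ ^ 2
  set R := (‖y‖ ^ 2)⁻¹ * ‖fderiv ℝ u y y‖ ^ 2
  have hgrad : (1 - r ^ 2) * D ≤ ∑ i, inner ℝ (partialDeriv i ψ y) (partialDeriv i φ y) := by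
    rw [Finset.mul_sum]
    exact Finset.sum_le_sum fun i _ ↦ mul_norm_sq_fderiv_radialPower_le_inner hφ hq y _
  have hradial : (1 - r ^ 2) * R
      ≤ (‖y‖ ^ 2)⁻¹ * inner ℝ (fderiv ℝ ψ y y) (fderiv ℝ φ y y) := by
    rw [mul_left_comm]
    gcongr
    exact mul_norm_sq_fderiv_radialPower_le_inner hφ hq y y
  have hR_le : R ≤ D := inv_norm_sq_mul_norm_sq_fderiv_apply_self_le u y
  rw [sum_inner_partialDeriv_anisotropicFlux]
  calc (1 - r ^ 2 * (1 + κ)) * D + κ * R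
      = (1 - r ^ 2) * D + κ * ((1 - r ^ 2) * R) - κ * r ^ 2 * (D - R) := by ring
    _ ≤ (1 - r ^ 2) * D + κ * ((1 - r ^ 2) * R) :=
        sub_le_self _ (mul_nonneg (by positivity) (sub_nonneg.mpr hR_le))
    _ ≤ _ := by gcongr

lemma mul_integral_add_le_integral_sum_inner_anisotropicFlux (hφ : ContDiff ℝ 2 φ)
    (hφc : HasCompactSupport φ) (h0 : 0 ∉ tsupport φ) (hκ : 0 ≤ κ) (hq : 0 ≤ q) :
    (1 - (q / (q + 1)) ^ 2 * (1 + κ))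
          * (∫ y, ∑ i, ‖partialDeriv i (fun x ↦ radialPower q (φ x)) y‖ ^ 2)
        + κ * ∫ y, (‖y‖ ^ 2)⁻¹ * ‖fderiv ℝ (fun x ↦ radialPower q (φ x)) y y‖ ^ 2
      ≤ ∫ y, ∑ i, inner ℝ (partialDeriv i (fun x ↦ radialPower (2 * q) (φ x)) y)
          (anisotropicFlux κ φ i y) := by
  have hφ1 : ContDiff ℝ 1 φ := hφ.of_le (by norm_num)
  have hu := contDiff_radialPower_comp hφ1 hq
  have hψ := contDiff_radialPower_comp hφ1 (by positivity : 0 ≤ 2 * q)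
  have huc := hasCompactSupport_radialPower_comp hφc q
  have hu0 : 0 ∉ tsupport fun x ↦ radialPower q (φ x) := fun h ↦
    h0 (tsupport_radialPower_comp_subset q φ h)
  have hint_grad := (integrable_sum_norm_sq_partialDeriv volume hu huc).const_mul
    (1 - (q / (q + 1)) ^ 2 * (1 + κ))
  have hint_radial :=
    (integrable_inv_norm_sq_mul_norm_sq_fderiv_apply_self volume hu huc hu0).const_mul κ
  rw [← integral_const_mul, ← integral_const_mul, ← integral_add hint_grad hint_radial]
  refine integral_mono (hint_grad.fun_add hint_radial) (integrable_finsetSum _ fun i _ ↦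
    integrable_inner_partialDeriv_anisotropicFlux hφ hφc h0 hψ κ i) fun y ↦ ?_
  exact le_sum_inner_partialDeriv_radialPower_anisotropicFlux
    (hφ1.differentiable one_ne_zero) hκ hq y

lemma mul_integral_sum_norm_sq_partialDeriv_radialPower_le (hφ : ContDiff ℝ 2 φ)
    (hφc : HasCompactSupport φ) (h0 : 0 ∉ tsupport φ) (hκ : 0 ≤ κ) (hq : 0 ≤ q)
    (hc : c ≤ (((Fintype.card ι : ℝ) - 2) / 2) ^ 2 * κ) :
    (1 - (q / (q + 1)) ^ 2 * (1 + κ))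
        * ∫ y, ∑ i, ‖partialDeriv i (fun x ↦ radialPower q (φ x)) y‖ ^ 2
      ≤ ∫ y, inner ℝ (radialPower (2 * q) (φ y)) (anisotropicOperator κ c φ y) := by
  have hφ1 : ContDiff ℝ 1 φ := hφ.of_le (by norm_num)
  have hpotential := mul_integral_inv_norm_sq_mul_norm_sq_le (c := c) volume
    (contDiff_radialPower_comp hφ1 hq) (hasCompactSupport_radialPower_comp hφc q)
    (fun h ↦ h0 (tsupport_radialPower_comp_subset q φ h)) hκ (by rwa [finrank_euclideanSpace])
  have hflux := mul_integral_add_le_integral_sum_inner_anisotropicFlux hφ hφc h0 hκ hq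
  rw [integral_inner_anisotropicOperator hφ hφc h0
    (contDiff_radialPower_comp hφ1 (by positivity : 0 ≤ 2 * q))]
  simp only [inner_radialPower_two_mul_self hq]
  exact le_sub_iff_add_le.mpr <| (add_le_add_right hpotential _).trans hflux

end AnisotropicOperator

section WeightedSobolev

lemma setIntegral_norm_rpow_mul_mem_Icc {E F : Type*} [TopologicalSpace E] [R1Space E]
    [MeasurableSpace E] [OpensMeasurableSpace E] (μ : Measure E) [IsFiniteMeasureOnCompacts μ]
    [NormedAddCommGroup F] {φ : E → F} (hφ : Continuous φ) (hφc : HasCompactSupport φ) {A : Set E}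
    (hφA : tsupport φ ⊆ A) {m : E → ℝ} {M : ℝ} (hm : ∀ y ∈ A, m y ∈ Set.Icc 0 M) {s : ℝ}
    (hs : 0 < s) :
    ∫ y in A, ‖φ y‖ ^ s * m y ∂μ ∈ Set.Icc 0 (M * ∫ y, ‖φ y‖ ^ s ∂μ) := by
  have hvanish : ∀ y ∉ A, ‖φ y‖ ^ s = 0 := fun y hy ↦ by
    rw [image_eq_zero_of_notMem_tsupport fun h ↦ hy (hφA h), norm_zero, Real.zero_rpow hs.ne']
  have hbound : ∀ y, ‖φ y‖ ^ s * m y ∈ Set.Icc 0 (M * ‖φ y‖ ^ s) := fun y ↦ by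
    by_cases hy : y ∈ A
    · exact ⟨mul_nonneg (by positivity) (hm y hy).1,
        (mul_comm _ _).trans_le (mul_le_mul_of_nonneg_right (hm y hy).2 (by positivity))⟩
    · simp [hvanish y hy]
  have hint : Integrable (fun y ↦ ‖φ y‖ ^ s) μ :=
    (hφ.norm.rpow_const fun _ ↦ .inr hs.le).integrable_of_hasCompactSupport
      (hφc.norm.comp_left (g := fun t : ℝ ↦ t ^ s) (Real.zero_rpow hs.ne'))
  rw [setIntegral_eq_integral_of_forall_compl_eq_zero fun y hy ↦ by rw [hvanish y hy, zero_mul],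
    ← integral_const_mul]
  exact ⟨integral_nonneg fun y ↦ (hbound y).1,
    integral_mono_of_nonneg (.of_forall fun y ↦ (hbound y).1) (hint.const_mul M)
      (.of_forall fun y ↦ (hbound y).2)⟩

variable {ι : Type*} [Fintype ι] [DecidableEq ι] {V : Type*} [NormedAddCommGroup V]
  [InnerProductSpace ℝ V]

lemma exists_weighted_sobolev_radialPower (hι : 3 ≤ Fintype.card ι) {q M : ℝ} (hq : 0 ≤ q)
    (hM : 0 < M) :
    ∃ K > (0 : ℝ), ∀ (A : Set (EuclideanSpace ℝ ι)) (m : EuclideanSpace ℝ ι → ℝ),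
      (∀ y ∈ A, m y ∈ Set.Icc 0 M) →
      ∀ φ : EuclideanSpace ℝ ι → V, ContDiff ℝ 1 φ → HasCompactSupport φ → tsupport φ ⊆ A →
      (∫ y in A, ‖φ y‖ ^ ((2 * q + 2) * Fintype.card ι / ((Fintype.card ι : ℝ) - 2)) * m y)
          ^ (((Fintype.card ι : ℝ) - 2) / Fintype.card ι)
        ≤ K * ∫ y, ∑ i, ‖partialDeriv i (fun x ↦ radialPower q (φ x)) y‖ ^ 2 := by
  obtain ⟨S, hS, hsobolev⟩ := exists_sobolev_sum_norm_sq_partialDeriv (F := V) hι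
  set n := (Fintype.card ι : ℝ)
  have hn : 0 < n - 2 := by linarith [show (3 : ℝ) ≤ n from Nat.ofNat_le_cast.mpr hι]
  refine ⟨M ^ ((n - 2) / n) * S, by positivity, fun A m hm φ hφ hφc hφA ↦ ?_⟩
  have hpow : ∀ y, ‖φ y‖ ^ ((2 * q + 2) * n / (n - 2))
      = ‖radialPower q (φ y)‖ ^ (2 * n / (n - 2)) := fun y ↦ by
    rw [norm_radialPower hq, ← Real.rpow_mul (norm_nonneg _)]
    ring_nf
  have hweight := setIntegral_norm_rpow_mul_mem_Icc volume hφ.continuous hφc hφA hm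
    (by positivity : 0 < (2 * q + 2) * n / (n - 2))
  calc _ ≤ (M * ∫ y, ‖φ y‖ ^ ((2 * q + 2) * n / (n - 2))) ^ ((n - 2) / n) :=
        Real.rpow_le_rpow hweight.1 hweight.2 (by positivity)
    _ = M ^ ((n - 2) / n)
          * (∫ y, ‖radialPower q (φ y)‖ ^ (2 * n / (n - 2))) ^ ((n - 2) / n) := by
        simp only [hpow]
        exact Real.mul_rpow hM.le (by positivity)
    _ ≤ M ^ ((n - 2) / n)
          * (S * ∫ y, ∑ i, ‖partialDeriv i (fun x ↦ radialPower q (φ x)) y‖ ^ 2) := by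
        gcongr
        exact hsobolev _ (contDiff_radialPower_comp hφ hq)
          (hasCompactSupport_radialPower_comp hφc q)
    _ = _ := (mul_assoc _ _ _).symm

theorem stmt_10_general (hι : 3 ≤ Fintype.card ι) {κ c p M : ℝ} (hκ : 0 ≤ κ)
    (hc : c ≤ (((Fintype.card ι : ℝ) - 2) / 2) ^ 2 * κ) (hp : 2 ≤ p)
    (hpκ : ((p - 2) / p) ^ 2 * (1 + κ) < 1) (hM : 0 < M) :
    ∃ C > (0 : ℝ), ∀ A : Set (EuclideanSpace ℝ ι), 0 ∉ A →
      ∀ m : EuclideanSpace ℝ ι → ℝ, (∀ y ∈ A, m y ∈ Set.Icc 0 M) →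
      ∀ φ : EuclideanSpace ℝ ι → V, ContDiff ℝ 2 φ → HasCompactSupport φ → tsupport φ ⊆ A →
      (∫ y in A, ‖φ y‖ ^ (p * Fintype.card ι / ((Fintype.card ι : ℝ) - 2)) * m y)
          ^ (((Fintype.card ι : ℝ) - 2) / (p * Fintype.card ι))
        ≤ C * (∫ y in A, inner ℝ (radialPower (p - 2) (φ y)) (anisotropicOperator κ c φ y))
          ^ (1 / p) := by
  obtain ⟨q, rfl⟩ : ∃ q, p = 2 * q + 2 := ⟨p / 2 - 1, by ring⟩
  have hq : 0 ≤ q := by linarith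
  have hratio : (2 * q + 2 - 2) / (2 * q + 2) = q / (q + 1) := by field_simp; ring
  obtain ⟨K, hK, hsobolev⟩ := exists_weighted_sobolev_radialPower (V := V) hι hq hM
  set n := (Fintype.card ι : ℝ)
  set ε := 1 - (q / (q + 1)) ^ 2 * (1 + κ)
  have hε : 0 < ε := sub_pos.mpr (hratio ▸ hpκ)
  refine ⟨(K / ε) ^ (1 / (2 * q + 2)), by positivity, fun A hA m hm φ hφ hφc hφA ↦ ?_⟩
  have hn : 0 < n - 2 := by linarith [show (3 : ℝ) ≤ n from Nat.ofNat_le_cast.mpr hι]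
  have hcoercive := mul_integral_sum_norm_sq_partialDeriv_radialPower_le hφ hφc
    (fun h ↦ hA (hφA h)) hκ hq hc
  set L := ∫ y in A, ‖φ y‖ ^ ((2 * q + 2) * n / (n - 2)) * m y
  set J := ∫ y in A, inner ℝ (radialPower (2 * q + 2 - 2) (φ y)) (anisotropicOperator κ c φ y)
  have hL : 0 ≤ L :=
    (setIntegral_norm_rpow_mul_mem_Icc volume hφ.continuous hφc hφA hm (by positivity)).1
  have hJ : J = ∫ y, inner ℝ (radialPower (2 * q) (φ y)) (anisotropicOperator κ c φ y) := by
    rw [← add_sub_cancel_right (2 * q) 2]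
    exact setIntegral_eq_integral_of_forall_compl_eq_zero fun y hy ↦ by
      simp [image_eq_zero_of_notMem_tsupport fun h ↦ hy (hφA h)]
  calc L ^ ((n - 2) / ((2 * q + 2) * n))
      = (L ^ ((n - 2) / n)) ^ (1 / (2 * q + 2)) := by
        rw [← Real.rpow_mul hL, div_mul_div_comm, mul_one, mul_comm n]
    _ ≤ (K / ε * J) ^ (1 / (2 * q + 2)) := by
        gcongr
        refine (hsobolev A m hm φ (hφ.of_le (by norm_num)) hφc hφA).trans ?_
        rw [div_mul_eq_mul_div, mul_div_assoc, hJ]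
        gcongr
        rwa [le_div_iff₀' hε]
    _ = (K / ε) ^ (1 / (2 * q + 2)) * J ^ (1 / (2 * q + 2)) := by
        rw [Real.mul_rpow (by positivity)]
        exact hJ ▸ (mul_nonneg hε.le (by positivity)).trans hcoercive

end WeightedSobolev

section ComplexValued

open scoped ComplexConjugate

lemma inner_radialPower_eq_re (s : ℝ) (z w : ℂ) :
    inner ℝ (radialPower s z) w = (w * conj z * ((‖z‖ ^ s : ℝ) : ℂ)).re := by
  rw [Complex.inner, radialPower, Complex.real_smul, map_mul, Complex.conj_ofReal]
  ring_nf

lemma re_setIntegral_anisotropicOperator {ι : Type*} [Fintype ι] [DecidableEq ι]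
    {φ : EuclideanSpace ℝ ι → ℂ} (hφ : ContDiff ℝ 2 φ) (hφc : HasCompactSupport φ)
    (h0 : 0 ∉ tsupport φ) (κ c : ℝ) {s : ℝ} (hs : 0 ≤ s) (A : Set (EuclideanSpace ℝ ι)) :
    (∫ y in A, anisotropicOperator κ c φ y * conj (φ y) * ((‖φ y‖ ^ s : ℝ) : ℂ)).re
      = ∫ y in A, inner ℝ (radialPower s (φ y)) (anisotropicOperator κ c φ y) := by
  have hcont : Continuous fun y ↦
      anisotropicOperator κ c φ y * conj (φ y) * ((‖φ y‖ ^ s : ℝ) : ℂ) :=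
    ((continuous_anisotropicOperator hφ h0 κ c).mul
      (Complex.continuous_conj.comp hφ.continuous)).mul
      (Complex.continuous_ofReal.comp (hφ.continuous.norm.rpow_const fun _ ↦ .inr hs))
  have hint := hcont.integrable_of_hasCompactSupport (μ := volume)
    (.intro hφc fun y hy ↦ by simp [image_eq_zero_of_notMem_tsupport hy])
  simp only [inner_radialPower_eq_re]
  exact (integral_re hint.restrict).symm

end ComplexValued

lemma sq_ratio_mul_lt_one {α p : ℝ} (hα : 0 < α) (hp2 : 2 ≤ p) (hp4 : p < 2 + 4 / α) :
    ((p - 2) / p) ^ 2 * (1 + α * (1 + α / 4)) < 1 := by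
  have hpα : (p - 2) * α < 4 := (lt_div_iff₀ hα).mp (by linarith)
  have hratio : (p - 2) / p * (1 + α / 2) < 1 := by
    rw [div_mul_eq_mul_div, div_lt_one (by linarith)]
    linarith
  calc ((p - 2) / p) ^ 2 * (1 + α * (1 + α / 4)) = ((p - 2) / p * (1 + α / 2)) ^ 2 := by ring
    _ < 1 := pow_lt_one₀ (mul_nonneg (div_nonneg (by linarith) (by linarith)) (by positivity))
        hratio two_ne_zero

lemma rpow_neg_mul_mem_Icc {r t α a₁ a₂ : ℝ} (hr : 0 < r) (h₁ : a₁ * r ^ α ≤ t)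
    (h₂ : t ≤ a₂ * r ^ α) : r ^ (-α) * t ∈ Set.Icc a₁ a₂ := by
  rw [Real.rpow_neg hr.le, ← div_eq_inv_mul]
  exact ⟨(le_div_iff₀ (by positivity)).mpr h₁, (div_le_iff₀ (by positivity)).mpr h₂⟩

/-- Sobolev-type inequality. For `N ≥ 3`, `2 ≤ p < 2 + 4/α`, there is
`C > 0` depending only on `N, p, α, a₁, a₂` such that for all admissible `Ω, a` and all
smooth compactly supported complex `φ` on `Ω_Ψ`,
`(∫_{Ω_Ψ} |φ|^{pN/(N−2)} m̃ dy)^{(N−2)/(pN)}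
  ≤ C (Re ∫_{Ω_Ψ} (−div(b∇φ) − ((N−2)²α(4+α)/16)|y|⁻²φ) conj(φ) |φ|^{p−2} dy)^{1/p}`. -/
theorem stmt_10 (N : ℕ) (hN : 3 ≤ N) (α : ℝ) (hα : 0 < α)
    (p : ℝ) (hp2 : 2 ≤ p) (hp4 : p < 2 + 4 / α)
    (a₁ a₂ : ℝ) (ha₁ : 0 < a₁) (ha₁₂ : a₁ ≤ a₂) :
    ∃ C > (0 : ℝ),
      ∀ (Ω : Set (EuclideanSpace ℝ (Fin N))), IsOpen Ω →
        (0 : EuclideanSpace ℝ (Fin N)) ∉ closure Ω →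
      ∀ (a : EuclideanSpace ℝ (Fin N) → ℝ), ContinuousOn a (closure Ω) →
        (∀ x ∈ closure Ω, a₁ * ‖x‖ ^ α ≤ a x ∧ a x ≤ a₂ * ‖x‖ ^ α) →
      ∀ (Ψinv : EuclideanSpace ℝ (Fin N) → EuclideanSpace ℝ (Fin N)),
        (∀ y, Ψinv y = ‖y‖ ^ (-α / (2 + α)) • y) →
      ∀ (ΩΨ : Set (EuclideanSpace ℝ (Fin N))), ΩΨ = {y | Ψinv y ∈ Ω} →
      ∀ (m : EuclideanSpace ℝ (Fin N) → ℝ),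
        (∀ y, m y = ‖Ψinv y‖ ^ (-α) * a (Ψinv y)) →
      ∀ (φ : EuclideanSpace ℝ (Fin N) → ℂ),
        ContDiff ℝ (⊤ : ℕ∞) φ → HasCompactSupport φ → tsupport φ ⊆ ΩΨ →
        (∫ y in ΩΨ, ‖φ y‖ ^ (p * N / ((N : ℝ) - 2)) * m y) ^ (((N : ℝ) - 2) / (p * N))
          ≤ C * ((∫ y in ΩΨ,
              ((-(∑ i : Fin N,
                  fderiv ℝ (fun z =>
                      fderiv ℝ φ z (EuclideanSpace.single i 1)
                        + ((α * (1 + α / 4) * z i / ‖z‖ ^ 2 : ℝ) : ℂ)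
                          * (∑ j : Fin N,
                              ((z j : ℝ) : ℂ)
                                * fderiv ℝ φ z (EuclideanSpace.single j 1)))
                    y (EuclideanSpace.single i 1)))
                - ((((N : ℝ) - 2) ^ 2 * α * (4 + α) / 16 / ‖y‖ ^ 2 : ℝ) : ℂ) * φ y)
                * (starRingEnd ℂ) (φ y) * ((‖φ y‖ ^ (p - 2) : ℝ) : ℂ)).re) ^ (1 / p) := by
  obtain ⟨C, hC, hsobolev⟩ := stmt_10_general (ι := Fin N) (V := ℂ) (κ := α * (1 + α / 4))
    (c := ((N : ℝ) - 2) ^ 2 * α * (4 + α) / 16) (by simpa using hN) (by positivity)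
    (by rw [Fintype.card_fin]; exact le_of_eq (by ring)) hp2 (sq_ratio_mul_lt_one hα hp2 hp4)
    (ha₁.trans_le ha₁₂)
  simp only [Fintype.card_fin] at hsobolev
  refine ⟨C, hC, fun Ω _ hΩ0 a _ ha Ψinv hΨinv ΩΨ hΩΨ m hm φ hφ hφc hφA ↦ ?_⟩
  subst hΩΨ
  have hA0 : 0 ∉ {y | Ψinv y ∈ Ω} := fun h ↦ hΩ0 (subset_closure (by simpa [hΨinv] using h))
  have hm_mem : ∀ y ∈ {y | Ψinv y ∈ Ω}, m y ∈ Set.Icc a₁ a₂ := fun y hy ↦ by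
    have hx : Ψinv y ∈ closure Ω := subset_closure hy
    exact hm y ▸
      rpow_neg_mul_mem_Icc (norm_pos_iff.mpr fun h ↦ hΩ0 (h ▸ hx)) (ha _ hx).1 (ha _ hx).2
  have hφ2 : ContDiff ℝ 2 φ := contDiff_infty.mp hφ 2
  refine (hsobolev _ hA0 m (fun y hy ↦ Set.Icc_subset_Icc_left ha₁.le (hm_mem y hy)) φ hφ2 hφc
    hφA).trans_eq ?_
  rw [← re_setIntegral_anisotropicOperator hφ2 hφc (fun h ↦ hA0 (hφA h)) _ _ (by linarith)]
  rfl
end
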